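/- arXiv:1307.0629 — 6 statements merged into one kernel-verified Lean document; each statement's English description precedes it below -/
import Mathlib

section
/- Let n ≥ 1 and r > 0. Let R : [0,1] × [0,r] → Mat_n(ℝ) be continuously differentiable with R(s,t) symmetric for every (s,t), and let S : [0,1] × [0,r] → Mat_n(ℝ) be twice continuously differentiable such that for every s ∈ [0,1]: ∂ₜ²S(s,t) + R(s,t)·S(s,t) = 0 for all t ∈ [0,r], S(s,0) = Id, and S(s,r) = 0. Then ∂ₜS(1,0) − ∂ₜS(0,0) = ∫₀¹ ∫₀ʳ S(s,t)ᵀ · (∂ₛR(s,t)) · S(s,t) dt ds. -/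
/-!
For solutions of `U'' + Q U = 0` and `V'' + P V = 0` with `Q` self-adjoint, the Wronskian
`U* V' - U'* V` has derivative `U* (Q - P) V`. If both solutions are `1` at `0` and vanish at `r`,
it equals `V'(0) - U'(0)*` at `0` and vanishes at `r`. The choice `V = U` shows that `U'(0)` is
self-adjoint, and then
`U'(0) - V'(0) = ∫ t in 0..r, U(t)* (Q(t) - P(t)) V(t)`.
For `U = S(σ, ·)` and `V = S(s, ·)` the right-hand side is a difference quotient in disguise:
dividing by `σ - s` and letting `σ → s` differentiates `∂ₜS(s, 0)` in `s` without ever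
differentiating `S` in `s`.
-/

open Matrix MeasureTheory Set

section Calculus

variable {E : Type*} [NormedAddCommGroup E] [NormedSpace ℝ E]

lemma hasDerivWithinAt_sub_smul {g : ℝ → E} {I : Set ℝ} {s : ℝ} (hg : ContinuousWithinAt g I s) :
    HasDerivWithinAt (fun x => (x - s) • g x) (g s) I s := by
  rw [hasDerivWithinAt_iff_tendsto_slope]
  refine (hg.mono sdiff_subset).tendsto.congr' ?_
  filter_upwards [self_mem_nhdsWithin] with x hx
  simp [slope_def_module, inv_smul_smul₀ (sub_ne_zero.2 hx.2)]

variable {a b c d : ℝ}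

lemma continuousOn_parametric_intervalIntegral {X : Type*} [TopologicalSpace X] [T2Space X]
    [FirstCountableTopology X] {K : Set X} (hK : IsCompact K) (hcd : c ≤ d) {f : X → ℝ → E}
    (hf : ContinuousOn f.uncurry (K ×ˢ Icc c d)) :
    ContinuousOn (fun x => ∫ t in c..d, f x t) K := by
  have : CompactSpace K := isCompact_iff_compactSpace.1 hK
  -- Projecting `t` to `[c, d]` extends `f` to all `t : ℝ` without changing the integral.
  have hext : Continuous (Function.uncurry fun (x : K) (t : ℝ) => f x (projIcc c d hcd t)) :=
    hf.comp_continuous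
      (f := fun p : K × ℝ => ((p.1 : X), (projIcc c d hcd p.2 : ℝ)))
      (by fun_prop) fun p => ⟨p.1.2, (projIcc c d hcd p.2).2⟩
  rw [continuousOn_iff_continuous_domRestrict]
  refine (intervalIntegral.continuous_parametric_intervalIntegral_of_continuous'
    (μ := volume) hext c d).congr fun x => intervalIntegral.integral_congr fun t ht => ?_
  rw [uIcc_of_le hcd] at ht
  simp only [projIcc_of_mem hcd ht]

lemma integral_eq_sub_of_hasDerivWithinAt [CompleteSpace E] {f f' : ℝ → E}
    (hf : ∀ x ∈ uIcc a b, HasDerivWithinAt f (f' x) (uIcc a b) x)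
    (hf' : IntervalIntegrable f' volume a b) : ∫ x in a..b, f' x = f b - f a :=
  intervalIntegral.integral_eq_sub_of_hasDeriv_right (fun x hx => (hf x hx).continuousWithinAt)
    (fun x hx => ((hf x (Ioo_subset_Icc_self hx)).hasDerivAt
      (Icc_mem_nhds hx.1 hx.2)).hasDerivWithinAt) hf'

/-- The average of `f` over the segment from `s` to `σ`, which extends the difference quotient of a
primitive of `f` continuously to `σ = s`. Parametrizing the segment by `[0, 1]` gives the
value `f s` at `σ = s`, where the interval average `⨍ x in s..σ, f x` is `0`. -/
noncomputable def segmentAverage (f : ℝ → E) (s σ : ℝ) : E :=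
  ∫ θ in (0 : ℝ)..1, f (s + (σ - s) * θ)

lemma segmentAverage_self [CompleteSpace E] (f : ℝ → E) (s : ℝ) : segmentAverage f s s = f s := by
  simp [segmentAverage]

lemma sub_smul_segmentAverage [CompleteSpace E] {f f' : ℝ → E} {I : Set ℝ} [I.OrdConnected]
    (hf : ∀ x ∈ I, HasDerivWithinAt f (f' x) I x) (hf' : ContinuousOn f' I)
    {s σ : ℝ} (hs : s ∈ I) (hσ : σ ∈ I) : (σ - s) • segmentAverage f' s σ = f σ - f s := by
  have hI : uIcc s σ ⊆ I := OrdConnected.uIcc_subset ‹_› hs hσ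
  rw [segmentAverage, intervalIntegral.smul_integral_comp_add_mul, mul_zero, add_zero, mul_one,
    add_sub_cancel]
  exact integral_eq_sub_of_hasDerivWithinAt (fun x hx => (hf x (hI hx)).mono hI)
    (hf'.mono hI).intervalIntegrable

lemma continuousOn_segmentAverage {f : ℝ → ℝ → E}
    (hf : ContinuousOn f.uncurry (Icc a b ×ˢ Icc c d)) {s : ℝ} (hs : s ∈ Icc a b) :
    ContinuousOn (fun p : ℝ × ℝ => segmentAverage (f · p.2) s p.1) (Icc a b ×ˢ Icc c d) := by
  refine continuousOn_parametric_intervalIntegral (isCompact_Icc.prod isCompact_Icc) zero_le_one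
    (f := fun p θ => f (s + (p.1 - s) * θ) p.2) ?_
  refine hf.comp (f := fun q : (ℝ × ℝ) × ℝ => (s + (q.1.1 - s) * q.2, q.1.2)) (by fun_prop) ?_
  rintro ⟨⟨σ, t⟩, θ⟩ ⟨⟨hσ, ht⟩, hθ⟩
  refine ⟨?_, ht⟩
  simpa [mul_comm] using (convex_Icc a b).add_smul_sub_mem hs hσ hθ

lemma continuousOn_sub_of_hasDerivWithinAt [CompleteSpace E] {f f' : ℝ → ℝ → E}
    (hf : ∀ s ∈ Icc a b, ∀ t ∈ Icc c d, HasDerivWithinAt (f · t) (f' s t) (Icc a b) s)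
    (hf' : ContinuousOn f'.uncurry (Icc a b ×ˢ Icc c d)) {s σ : ℝ} (hs : s ∈ Icc a b)
    (hσ : σ ∈ Icc a b) : ContinuousOn (fun t => f σ t - f s t) (Icc c d) := by
  have hcont : ContinuousOn (fun t => (σ - s) • segmentAverage (f' · t) s σ) (Icc c d) :=
    (((continuousOn_segmentAverage hf' hs).uncurry_left
      (f := fun σ t => segmentAverage (f' · t) s σ) σ hσ).const_smul (σ - s) :)
  exact hcont.congr fun t ht =>
    (sub_smul_segmentAverage (hf · · t ht) (hf'.uncurry_right t ht) hs hσ).symm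

end Calculus

section BanachAlgebra

variable {𝔸 : Type*} [NormedRing 𝔸] [NormedAlgebra ℝ 𝔸]

lemma hasDerivWithinAt_integral_mul_sub_mul [CompleteSpace 𝔸] {a b c d : ℝ} (hcd : c ≤ d)
    {A ρ ρ' : ℝ → ℝ → 𝔸} {B : ℝ → 𝔸}
    (hA : ContinuousOn A.uncurry (Icc a b ×ˢ Icc c d)) (hB : ContinuousOn B (Icc c d))
    (hρ : ∀ s ∈ Icc a b, ∀ t ∈ Icc c d, HasDerivWithinAt (ρ · t) (ρ' s t) (Icc a b) s)
    (hρ' : ContinuousOn ρ'.uncurry (Icc a b ×ˢ Icc c d)) {s : ℝ} (hs : s ∈ Icc a b) :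
    HasDerivWithinAt (fun σ => ∫ t in c..d, A σ t * (ρ σ t - ρ s t) * B t)
      (∫ t in c..d, A s t * ρ' s t * B t) (Icc a b) s := by
  let G (σ : ℝ) : 𝔸 := ∫ t in c..d, A σ t * segmentAverage (ρ' · t) s σ * B t
  have hG : ContinuousOn G (Icc a b) :=
    continuousOn_parametric_intervalIntegral isCompact_Icc hcd
      ((hA.mul (continuousOn_segmentAverage hρ' hs)).mul
        (hB.comp continuousOn_snd fun _ hp => hp.2))
  have hGs : G s = ∫ t in c..d, A s t * ρ' s t * B t := by simp only [G, segmentAverage_self]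
  rw [← hGs]
  refine (hasDerivWithinAt_sub_smul (hG s hs)).congr_of_mem (fun σ hσ => ?_) hs
  rw [← intervalIntegral.integral_smul]
  refine intervalIntegral.integral_congr fun t ht => ?_
  rw [uIcc_of_le hcd] at ht
  simp only [← sub_smul_segmentAverage (hρ · · t ht) (hρ'.uncurry_right t ht) hs hσ,
    mul_smul_comm, smul_mul_assoc]

variable [StarRing 𝔸]

/-- `U`, with derivative `U'`, is a stable Jacobi tensor on `[0, r]`: it solves `U'' + Q U = 0` with
`U 0 = 1` and `U r = 0`. The symmetry of the curvature tensor `Q` is part of the structure. -/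
structure IsStableJacobiTensor (r : ℝ) (Q U U' : ℝ → 𝔸) : Prop where
  isSelfAdjoint : ∀ t ∈ Icc 0 r, IsSelfAdjoint (Q t)
  hasDerivWithinAt : ∀ t ∈ Icc 0 r, HasDerivWithinAt U (U' t) (Icc 0 r) t
  hasDerivWithinAt_deriv : ∀ t ∈ Icc 0 r, HasDerivWithinAt U' (-(Q t * U t)) (Icc 0 r) t
  apply_zero : U 0 = 1
  apply_right : U r = 0

lemma IsStableJacobiTensor.continuousOn {r : ℝ} {Q U U' : ℝ → 𝔸}
    (hU : IsStableJacobiTensor r Q U U') : ContinuousOn U (Icc 0 r) :=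
  fun t ht => (hU.hasDerivWithinAt t ht).continuousWithinAt

variable [ContinuousStar 𝔸] [StarModule ℝ 𝔸]

lemma hasDerivWithinAt_wronskian {P Q U U' V V' : ℝ → 𝔸} {I : Set ℝ} {t : ℝ}
    (hQ : IsSelfAdjoint (Q t))
    (hU : HasDerivWithinAt U (U' t) I t) (hU' : HasDerivWithinAt U' (-(Q t * U t)) I t)
    (hV : HasDerivWithinAt V (V' t) I t) (hV' : HasDerivWithinAt V' (-(P t * V t)) I t) :
    HasDerivWithinAt (fun τ => star (U τ) * V' τ - star (U' τ) * V τ)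
      (star (U t) * (Q t - P t) * V t) I t := by
  refine ((hU.star.mul hV').sub (hU'.star.mul hV)).congr_deriv ?_
  rw [star_neg, star_mul, hQ.star_eq]
  noncomm_ring

namespace IsStableJacobiTensor

variable [CompleteSpace 𝔸] {r : ℝ} {P Q U U' V V' : ℝ → 𝔸}

lemma star_deriv_zero_sub_deriv_zero (hr : 0 ≤ r) (hU : IsStableJacobiTensor r Q U U')
    (hV : IsStableJacobiTensor r P V V') (hQP : ContinuousOn (fun t => Q t - P t) (Icc 0 r)) :
    star (U' 0) - V' 0 = ∫ t in 0..r, star (U t) * (Q t - P t) * V t := by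
  have hcont : ContinuousOn (fun t => star (U t) * (Q t - P t) * V t) (Icc 0 r) :=
    (hU.continuousOn.star.mul hQP).mul hV.continuousOn
  have hderiv : ∀ t ∈ uIcc 0 r, HasDerivWithinAt
      (fun τ => star (U τ) * V' τ - star (U' τ) * V τ)
      (star (U t) * (Q t - P t) * V t) (uIcc 0 r) t := by
    rw [uIcc_of_le hr]
    exact fun t ht => hasDerivWithinAt_wronskian (hU.isSelfAdjoint t ht)
      (hU.hasDerivWithinAt t ht) (hU.hasDerivWithinAt_deriv t ht)
      (hV.hasDerivWithinAt t ht) (hV.hasDerivWithinAt_deriv t ht)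
  rw [integral_eq_sub_of_hasDerivWithinAt hderiv (hcont.intervalIntegrable_of_Icc hr)]
  simp [hU.apply_zero, hV.apply_zero, hU.apply_right, hV.apply_right]

lemma isSelfAdjoint_deriv_zero (hr : 0 ≤ r) (hU : IsStableJacobiTensor r Q U U') :
    IsSelfAdjoint (U' 0) :=
  sub_eq_zero.1 <| by
    simpa [continuousOn_const] using hU.star_deriv_zero_sub_deriv_zero hr hU

lemma deriv_zero_sub_deriv_zero (hr : 0 ≤ r) (hU : IsStableJacobiTensor r Q U U')
    (hV : IsStableJacobiTensor r P V V') (hQP : ContinuousOn (fun t => Q t - P t) (Icc 0 r)) :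
    U' 0 - V' 0 = ∫ t in 0..r, star (U t) * (Q t - P t) * V t := by
  rw [← hU.star_deriv_zero_sub_deriv_zero hr hV hQP, hU.isSelfAdjoint_deriv_zero hr]

end IsStableJacobiTensor

section Family

variable [CompleteSpace 𝔸] {a b r : ℝ} {R R' S S' : ℝ → ℝ → 𝔸}

lemma hasDerivWithinAt_initial_deriv (hr : 0 ≤ r)
    (hS : ∀ s ∈ Icc a b, IsStableJacobiTensor r (R s) (S s) (S' s))
    (hS_cont : ContinuousOn S.uncurry (Icc a b ×ˢ Icc 0 r))
    (hR : ∀ s ∈ Icc a b, ∀ t ∈ Icc 0 r, HasDerivWithinAt (R · t) (R' s t) (Icc a b) s)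
    (hR' : ContinuousOn R'.uncurry (Icc a b ×ˢ Icc 0 r)) {s : ℝ} (hs : s ∈ Icc a b) :
    HasDerivWithinAt (S' · 0) (∫ t in 0..r, star (S s t) * R' s t * S s t) (Icc a b) s := by
  have hint := hasDerivWithinAt_integral_mul_sub_mul (A := fun s t => star (S s t)) hr
    hS_cont.star (hS s hs).continuousOn hR hR' hs
  refine (hint.const_add (S' s 0)).congr_of_mem (fun σ hσ => ?_) hs
  rw [← sub_eq_iff_eq_add']
  exact (hS σ hσ).deriv_zero_sub_deriv_zero hr (hS s hs)
    (continuousOn_sub_of_hasDerivWithinAt hR hR' hs hσ)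

theorem hopf_formula_stable_general (hr : 0 ≤ r) (hab : a ≤ b)
    (hS : ∀ s ∈ Icc a b, IsStableJacobiTensor r (R s) (S s) (S' s))
    (hS_cont : ContinuousOn S.uncurry (Icc a b ×ˢ Icc 0 r))
    (hR : ∀ s ∈ Icc a b, ∀ t ∈ Icc 0 r, HasDerivWithinAt (R · t) (R' s t) (Icc a b) s)
    (hR' : ContinuousOn R'.uncurry (Icc a b ×ˢ Icc 0 r)) :
    S' b 0 - S' a 0 = ∫ s in a..b, ∫ t in 0..r, star (S s t) * R' s t * S s t := by
  refine (integral_eq_sub_of_hasDerivWithinAt (f := (S' · 0)) (fun s hs => ?_) ?_).symm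
  · rw [uIcc_of_le hab] at hs ⊢
    exact hasDerivWithinAt_initial_deriv hr hS hS_cont hR hR' hs
  · exact (continuousOn_parametric_intervalIntegral isCompact_Icc hr
      ((hS_cont.star.mul hR').mul hS_cont)).intervalIntegrable_of_Icc hab

end Family

end BanachAlgebra

section Matrix

lemma hasDerivWithinAt_matrix_iff {m n : Type*} [Finite m] [Finite n] {F : ℝ → Matrix m n ℝ}
    {F' : Matrix m n ℝ} {I : Set ℝ} {x : ℝ} :
    HasDerivWithinAt F F' I x ↔ ∀ i j, HasDerivWithinAt (F · i j) (F' i j) I x := by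
  have := Fintype.ofFinite m
  have := Fintype.ofFinite n
  exact hasDerivWithinAt_pi.trans (forall_congr' fun i => hasDerivWithinAt_pi)

open scoped Matrix.Norms.L2Operator

variable {m n : Type*} [Fintype m] [Fintype n] [DecidableEq n]

lemma intervalIntegral_matrix_apply {F : ℝ → Matrix m n ℝ} {a b : ℝ}
    (hF : IntervalIntegrable F volume a b) (i : m) (j : n) :
    (∫ t in a..b, F t) i j = ∫ t in a..b, F t i j :=
  ((LinearMap.toContinuousLinearMap (entryLinearMap ℝ ℝ i j)).intervalIntegral_comp_comm hF).symm

lemma intervalIntegral_intervalIntegral_matrix_apply {F : ℝ → ℝ → Matrix m n ℝ} {a b c d : ℝ}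
    (hab : a ≤ b) (hcd : c ≤ d) (hF : ContinuousOn F.uncurry (Icc a b ×ˢ Icc c d))
    (i : m) (j : n) :
    (∫ s in a..b, ∫ t in c..d, F s t) i j = ∫ s in a..b, ∫ t in c..d, F s t i j := by
  rw [intervalIntegral_matrix_apply ((continuousOn_parametric_intervalIntegral isCompact_Icc hcd
    hF).intervalIntegrable_of_Icc hab)]
  refine intervalIntegral.integral_congr fun s hs => ?_
  rw [uIcc_of_le hab] at hs
  exact intervalIntegral_matrix_apply ((hF.uncurry_left s hs).intervalIntegrable_of_Icc hcd) i j

lemma isStableJacobiTensor_of_entries {r : ℝ} {Q U U' U'' : ℝ → Matrix n n ℝ}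
    (hQ : ∀ t ∈ Icc 0 r, (Q t).IsSymm)
    (hU : ∀ t ∈ Icc 0 r, ∀ i j, HasDerivWithinAt (U · i j) (U' t i j) (Icc 0 r) t)
    (hU' : ∀ t ∈ Icc 0 r, ∀ i j, HasDerivWithinAt (U' · i j) (U'' t i j) (Icc 0 r) t)
    (hJac : ∀ t ∈ Icc 0 r, U'' t + Q t * U t = 0) (hU0 : U 0 = 1) (hUr : U r = 0) :
    IsStableJacobiTensor r Q U U' where
  isSelfAdjoint t ht := (conjTranspose_eq_transpose_of_trivial (Q t)).trans (hQ t ht)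
  hasDerivWithinAt t ht := hasDerivWithinAt_matrix_iff.2 (hU t ht)
  hasDerivWithinAt_deriv t ht :=
    eq_neg_of_add_eq_zero_left (hJac t ht) ▸ hasDerivWithinAt_matrix_iff.2 (hU' t ht)
  apply_zero := hU0
  apply_right := hUr

end Matrix

/-- Hopf-type formula (stable case, matrix form).
If `S(s,·)` solves the matrix Jacobi equation `∂ₜ²S + R·S = 0` on `[0,r]` with
`S(s,0) = Id`, `S(s,r) = 0`, where `R` is C¹ and symmetric and `S` is C² on
`[0,1] × [0,r]`, then
`∂ₜS(1,0) − ∂ₜS(0,0) = ∫₀¹ ∫₀ʳ S(s,t)ᵀ · (∂ₛR(s,t)) · S(s,t) dt ds`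
(entrywise). -/
theorem hopf_formula_stable (n : ℕ) (hn : 1 ≤ n) (r : ℝ) (hr : 0 < r)
    (R S St Stt Rs : ℝ → ℝ → Matrix (Fin n) (Fin n) ℝ)
    -- R is continuously differentiable on [0,1] × [0,r], with s-partial Rs
    (hR_cd : ∀ i j, ContDiffOn ℝ 1 (fun p : ℝ × ℝ => R p.1 p.2 i j)
      (Icc 0 1 ×ˢ Icc 0 r))
    (hRs : ∀ s ∈ Icc (0:ℝ) 1, ∀ t ∈ Icc (0:ℝ) r, ∀ i j,
      HasDerivWithinAt (fun σ => R σ t i j) (Rs s t i j) (Icc 0 1) s)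
    (hRs_cont : ∀ i j, ContinuousOn (fun p : ℝ × ℝ => Rs p.1 p.2 i j)
      (Icc 0 1 ×ˢ Icc 0 r))
    -- R(s,t) is symmetric
    (hR_symm : ∀ s ∈ Icc (0:ℝ) 1, ∀ t ∈ Icc (0:ℝ) r, (R s t).IsSymm)
    -- S is twice continuously differentiable on [0,1] × [0,r],
    -- with first and second t-partials St and Stt
    (hS_cd : ∀ i j, ContDiffOn ℝ 2 (fun p : ℝ × ℝ => S p.1 p.2 i j)
      (Icc 0 1 ×ˢ Icc 0 r))
    (hSt : ∀ s ∈ Icc (0:ℝ) 1, ∀ t ∈ Icc (0:ℝ) r, ∀ i j,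
      HasDerivWithinAt (fun τ => S s τ i j) (St s t i j) (Icc 0 r) t)
    (hStt : ∀ s ∈ Icc (0:ℝ) 1, ∀ t ∈ Icc (0:ℝ) r, ∀ i j,
      HasDerivWithinAt (fun τ => St s τ i j) (Stt s t i j) (Icc 0 r) t)
    -- the Jacobi equation and the boundary conditions
    (hJac : ∀ s ∈ Icc (0:ℝ) 1, ∀ t ∈ Icc (0:ℝ) r, Stt s t + R s t * S s t = 0)
    (hS0 : ∀ s ∈ Icc (0:ℝ) 1, S s 0 = 1)
    (hSr : ∀ s ∈ Icc (0:ℝ) 1, S s r = 0) :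
    ∀ i j, (St 1 0 - St 0 0) i j
      = ∫ s in (0:ℝ)..1, ∫ t in (0:ℝ)..r, ((S s t)ᵀ * Rs s t * S s t) i j := by
  open scoped Matrix.Norms.L2Operator in
  have hS_cont : ContinuousOn S.uncurry (Icc 0 1 ×ˢ Icc 0 r) :=
    continuousOn_pi.2 fun i => continuousOn_pi.2 fun j => (hS_cd i j).continuousOn
  have hRs_cont' : ContinuousOn Rs.uncurry (Icc 0 1 ×ˢ Icc 0 r) :=
    continuousOn_pi.2 fun i => continuousOn_pi.2 fun j => hRs_cont i j
  intro i j
  rw [hopf_formula_stable_general hr.le zero_le_one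
    (fun s hs => isStableJacobiTensor_of_entries (hR_symm s hs) (hSt s hs) (hStt s hs)
      (hJac s hs) (hS0 s hs) (hSr s hs)) hS_cont
    (fun s hs t ht => hasDerivWithinAt_matrix_iff.2 (hRs s hs t ht)) hRs_cont']
  exact intervalIntegral_intervalIntegral_matrix_apply zero_le_one hr.le
    ((hS_cont.star.mul hRs_cont').mul hS_cont) i j
end

section
/- Let n ≥ 1 and r > 0. Let R : [0,1] × [0,r] → Mat_n(ℝ) be continuously differentiable with R(s,t) symmetric for every (s,t), and let S : [0,1] × [0,r] → Mat_n(ℝ) be twice continuously differentiable such that for every s ∈ [0,1]: ∂ₜ²S(s,t) + R(s,t)·S(s,t) = 0 for all t ∈ [0,r], S(s,0) = Id, and S(s,r) = 0. Then for every s ∈ [0,1], ∂ₛ(∂ₜS(s,0)) = ∫₀ʳ S(s,t)ᵀ · (∂ₛR(s,t)) · S(s,t) dt. -/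
open Matrix MeasureTheory Set

/-! The Wronskian is taken between the solutions `S(σ,·)` and `S(s,·)` for two parameters, rather
than between `∂ₛS` and `S`, so that no mixed derivative of `S` is needed. With
`W(t) = ∂ₜS(σ,t)⋆ S(s,t) - S(σ,t)⋆ ∂ₜS(s,t)`, the Jacobi equation gives
`W'(t) = -S(σ,t)⋆ (R(σ,t) - R(s,t)) S(s,t)`, while the boundary conditions give `W(b) = 0` and
`W(a) = ∂ₜS(σ,a)⋆ - ∂ₜS(s,a)`. Hence
`∂ₜS(σ,a)⋆ - ∂ₜS(s,a) = ∫ₐᵇ S(σ,t)⋆ (R(σ,t) - R(s,t)) S(s,t) dt`.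
Taking `σ = s` shows that `∂ₜS(s,a)` is self-adjoint, so the star on the left can be dropped.
Dividing by `σ - s` and letting `σ → s` yields the formula. Nothing here is specific to matrices:
the argument takes place in any real Banach algebra with a continuous involution. -/

open Filter
open scoped Interval Topology

section ParameterDependence

lemma tendstoUniformlyOn_of_continuousOn_prod {X Y E : Type*} [TopologicalSpace X]
    [TopologicalSpace Y] [UniformSpace E] {f : X → Y → E} {K : Set X} {I : Set Y} {x : X}
    (hI : IsCompact I) (hf : ContinuousOn f.uncurry (K ×ˢ I)) (hx : x ∈ K) :
    TendstoUniformlyOn f (f x) (𝓝[K] x) I := fun u hu ↦ by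
  obtain ⟨v, hv, hvu⟩ := hI.mem_uniformity_of_prod hf hx (symm_le_uniformity hu)
  exact mem_of_superset hv hvu

lemma continuousOn_left_of_continuousOn_prod {X Y E : Type*} [TopologicalSpace X]
    [TopologicalSpace Y] [TopologicalSpace E] {f : X → Y → E} {K : Set X} {I : Set Y} {x : X}
    (hf : ContinuousOn f.uncurry (K ×ˢ I)) (hx : x ∈ K) : ContinuousOn (f x) I :=
  hf.comp (f := fun y ↦ (x, y)) (by fun_prop) fun _ hy ↦ ⟨hx, hy⟩

lemma norm_slope_sub_le_of_norm_hasDerivWithin_sub_le {𝕜 E : Type*} [RCLike 𝕜]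
    [NormedAddCommGroup E] [NormedSpace 𝕜 E] {f f' : 𝕜 → E} {c : E} {K : Set 𝕜} {C : ℝ} {x y : 𝕜}
    (hK : Convex ℝ K) (hf : ∀ z ∈ K, HasDerivWithinAt f (f' z) K z)
    (hC : ∀ z ∈ K, ‖f' z - c‖ ≤ C) (hx : x ∈ K) (hy : y ∈ K) (hxy : x ≠ y) :
    ‖slope f x y - c‖ ≤ C := by
  have hderiv (z) (hz : z ∈ K) : HasDerivWithinAt (fun w ↦ f w - w • c) (f' z - c) K z := by
    simpa using (hf z hz).fun_sub ((hasDerivWithinAt_id z K).smul_const c)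
  have hyx : y - x ≠ 0 := sub_ne_zero.2 hxy.symm
  have hslope : slope f x y - c = (y - x)⁻¹ • ((f y - y • c) - (f x - x • c)) := by
    rw [slope_def_module, sub_sub_sub_comm, ← sub_smul, smul_sub _ (f y - f x),
      inv_smul_smul₀ hyx]
  rw [hslope, norm_smul, norm_inv, inv_mul_le_iff₀ (norm_pos_iff.2 hyx), mul_comm]
  exact hK.norm_image_sub_le_of_norm_hasDerivWithin_le hderiv hC hx hy

lemma tendstoUniformlyOn_slope {𝕜 Y E : Type*} [RCLike 𝕜] [TopologicalSpace Y]
    [NormedAddCommGroup E] [NormedSpace 𝕜 E] {f f' : 𝕜 → Y → E} {K : Set 𝕜} {I : Set Y} {s : 𝕜}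
    (hK : Convex ℝ K) (hI : IsCompact I) (hf' : ContinuousOn f'.uncurry (K ×ˢ I))
    (hf : ∀ σ ∈ K, ∀ t ∈ I, HasDerivWithinAt (f · t) (f' σ t) K σ) (hs : s ∈ K) :
    TendstoUniformlyOn (fun σ t ↦ slope (f · t) s σ) (f' s) (𝓝[K \ {s}] s) I := by
  rw [Metric.tendstoUniformlyOn_iff]
  intro ε hε
  have hclose : ∀ᶠ σ in 𝓝[K] s, ∀ t ∈ I, dist (f' s t) (f' σ t) < ε / 2 :=
    Metric.tendstoUniformlyOn_iff.1 (tendstoUniformlyOn_of_continuousOn_prod hI hf' hs) _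
      (half_pos hε)
  filter_upwards [eventually_mem_nhdsWithin,
    nhdsWithin_mono s sdiff_subset (hK.eventually_nhdsWithin_segment hs hclose)]
    with σ ⟨hσ, hne⟩ hseg t ht
  have hsub : segment ℝ s σ ⊆ K := hK.segment_subset hs hσ
  rw [dist_comm, dist_eq_norm]
  refine (norm_slope_sub_le_of_norm_hasDerivWithin_sub_le (convex_segment s σ)
    (fun x hx ↦ (hf x (hsub hx) t ht).mono hsub) (fun x hx ↦ ?_) (left_mem_segment ℝ s σ)
    (right_mem_segment ℝ s σ) (Ne.symm hne)).trans_lt (half_lt_self hε)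
  rw [← dist_eq_norm, dist_comm]
  exact (hseg x hx t ht).le

lemma hasDerivWithinAt_integral_mul_sub_mul_s1 {A : Type*} [NormedRing A] [NormedAlgebra ℝ A]
    {K : Set ℝ} {a b s : ℝ} {f ρ ρ' : ℝ → ℝ → A} {g : ℝ → A} (hK : Convex ℝ K)
    (hf : ContinuousOn f.uncurry (K ×ˢ [[a, b]])) (hρ : ∀ σ ∈ K, ContinuousOn (ρ σ) [[a, b]])
    (hρ' : ContinuousOn ρ'.uncurry (K ×ˢ [[a, b]]))
    (hρρ' : ∀ σ ∈ K, ∀ t ∈ [[a, b]], HasDerivWithinAt (ρ · t) (ρ' σ t) K σ)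
    (hg : ContinuousOn g [[a, b]]) (hs : s ∈ K) :
    HasDerivWithinAt (fun σ ↦ ∫ t in a..b, f σ t * (ρ σ t - ρ s t) * g t)
      (∫ t in a..b, f s t * ρ' s t * g t) K s := by
  have hfs := continuousOn_left_of_continuousOn_prod hf hs
  have hρs := continuousOn_left_of_continuousOn_prod hρ' hs
  have hf_lim : TendstoUniformlyOn f (f s) (𝓝[K \ {s}] s) [[a, b]] := fun u hu ↦
    nhdsWithin_mono s sdiff_subset
      (tendstoUniformlyOn_of_continuousOn_prod isCompact_uIcc hf hs u hu)
  have hg_lim : TendstoUniformlyOn (fun _ ↦ g) g (𝓝[K \ {s}] s) [[a, b]] := fun u hu ↦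
    .of_forall fun _ _ _ ↦ refl_mem_uniformity hu
  have hlim : TendstoUniformlyOn (fun σ t ↦ f σ t * slope (ρ · t) s σ * g t)
      (fun t ↦ f s t * ρ' s t * g t) (𝓝[K \ {s}] s) [[a, b]] := by
    have hρ_lim := tendstoUniformlyOn_slope hK isCompact_uIcc hρ' hρρ' hs
    rw [← tendstoLocallyUniformlyOn_iff_tendstoUniformlyOn_of_compact isCompact_uIcc]
      at hf_lim hρ_lim hg_lim ⊢
    exact (hf_lim.mul₀ hρ_lim hfs hρs).mul₀ hg_lim (hfs.mul hρs) hg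
  have hcont : ∀ᶠ σ in 𝓝[K \ {s}] s,
      ContinuousOn (fun t ↦ f σ t * slope (ρ · t) s σ * g t) [[a, b]] := by
    filter_upwards [eventually_mem_nhdsWithin] with σ hσ
    simp only [slope_def_module]
    exact ((continuousOn_left_of_continuousOn_prod hf hσ.1).mul
      (((hρ σ hσ.1).sub (hρ s hs)).const_smul _)).mul hg
  rw [hasDerivWithinAt_iff_tendsto_slope]
  -- The integral vanishes at `σ = s`, so its slope is the integral of `f σ * slope ρ * g`.
  refine (hlim.tendsto_intervalIntegral_of_continuousOn hcont).congr fun σ ↦ ?_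
  simp only [slope_def_module, sub_self, mul_zero, zero_mul, intervalIntegral.integral_zero,
    sub_zero, mul_smul_comm, smul_mul_assoc, intervalIntegral.integral_smul]

end ParameterDependence

lemma integral_eq_sub_of_hasDerivWithinAt_uIcc {E : Type*} [NormedAddCommGroup E]
    [NormedSpace ℝ E] [CompleteSpace E] {f f' : ℝ → E} {a b : ℝ}
    (hf : ∀ t ∈ [[a, b]], HasDerivWithinAt f (f' t) [[a, b]] t)
    (hf' : IntervalIntegrable f' volume a b) : ∫ t in a..b, f' t = f b - f a :=
  intervalIntegral.integral_eq_sub_of_hasDeriv_right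
    (fun t ht ↦ (hf t ht).continuousWithinAt)
    (fun t ht ↦ ((hf t (Ioo_subset_Icc_self ht)).hasDerivAt
      (Icc_mem_nhds ht.1 ht.2)).hasDerivWithinAt) hf'

section Jacobi

variable {A : Type*} [NormedRing A] [NormedAlgebra ℝ A]

/-- `S` solves the Jacobi equation `S'' + R S = 0` on `I`. The derivative `S'` is carried as data,
so that the equation is the first-order statement that `S'` has derivative `-R S`. -/
structure IsJacobiSolutionOn (R S S' : ℝ → A) (I : Set ℝ) : Prop where
  hasDerivWithinAt : ∀ t ∈ I, HasDerivWithinAt S (S' t) I t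
  hasDerivWithinAt_deriv : ∀ t ∈ I, HasDerivWithinAt S' (-(R t * S t)) I t

/-- `S` solves the Jacobi boundary value problem on the segment between `a` and `b`, with value `1`
at `a` and `0` at `b`. -/
structure IsJacobiBoundarySolution (R S S' : ℝ → A) (a b : ℝ) : Prop
    extends IsJacobiSolutionOn R S S' [[a, b]] where
  apply_left : S a = 1
  apply_right : S b = 0

/-- The Wronskian `S₁'⋆ S₂ - S₁⋆ S₂'` of two algebra-valued functions with given derivatives. -/
def wronskian [Star A] (S₁ S₁' S₂ S₂' : ℝ → A) (t : ℝ) : A :=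
  star (S₁' t) * S₂ t - star (S₁ t) * S₂' t

variable {R₁ R₂ S₁ S₁' S₂ S₂' : ℝ → A} {a b : ℝ}

lemma IsJacobiSolutionOn.continuousOn {R S S' : ℝ → A} {I : Set ℝ}
    (h : IsJacobiSolutionOn R S S' I) : ContinuousOn S I := fun t ht ↦
  (h.hasDerivWithinAt t ht).continuousWithinAt

variable [StarRing A] [ContinuousStar A] [StarModule ℝ A]

lemma IsJacobiSolutionOn.hasDerivWithinAt_wronskian {I : Set ℝ} {t : ℝ}
    (h₁ : IsJacobiSolutionOn R₁ S₁ S₁' I) (h₂ : IsJacobiSolutionOn R₂ S₂ S₂' I)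
    (hR₁ : IsSelfAdjoint (R₁ t)) (ht : t ∈ I) :
    HasDerivWithinAt (wronskian S₁ S₁' S₂ S₂') (-(star (S₁ t) * (R₁ t - R₂ t) * S₂ t)) I t := by
  have hW := ((h₁.hasDerivWithinAt_deriv t ht).star.mul (h₂.hasDerivWithinAt t ht)).sub
    ((h₁.hasDerivWithinAt t ht).star.mul (h₂.hasDerivWithinAt_deriv t ht))
  refine hW.congr_deriv ?_
  rw [star_neg, star_mul, hR₁.star_eq]
  noncomm_ring

variable [CompleteSpace A]

namespace IsJacobiBoundarySolution

lemma star_deriv_sub_deriv_left (h₁ : IsJacobiBoundarySolution R₁ S₁ S₁' a b)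
    (h₂ : IsJacobiBoundarySolution R₂ S₂ S₂' a b)
    (hR₁ : ∀ t ∈ [[a, b]], IsSelfAdjoint (R₁ t)) (hR₁c : ContinuousOn R₁ [[a, b]])
    (hR₂c : ContinuousOn R₂ [[a, b]]) :
    star (S₁' a) - S₂' a = ∫ t in a..b, star (S₁ t) * (R₁ t - R₂ t) * S₂ t := by
  have hW := integral_eq_sub_of_hasDerivWithinAt_uIcc
    (fun t ht ↦ h₁.hasDerivWithinAt_wronskian h₂.toIsJacobiSolutionOn (hR₁ t ht) ht)
    ((h₁.continuousOn.star.mul (hR₁c.sub hR₂c)).mul h₂.continuousOn).neg.intervalIntegrable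
  rw [intervalIntegral.integral_neg, neg_eq_iff_eq_neg] at hW
  simp [hW, wronskian, h₁.apply_left, h₁.apply_right, h₂.apply_left, h₂.apply_right]

lemma isSelfAdjoint_deriv_left {R S S' : ℝ → A} (h : IsJacobiBoundarySolution R S S' a b)
    (hR : ∀ t ∈ [[a, b]], IsSelfAdjoint (R t)) (hRc : ContinuousOn R [[a, b]]) :
    IsSelfAdjoint (S' a) := by
  simpa [isSelfAdjoint_iff, sub_eq_zero] using h.star_deriv_sub_deriv_left h hR hRc hRc

end IsJacobiBoundarySolution

lemma hasDerivWithinAt_deriv_left_of_isJacobiBoundarySolution {K : Set ℝ} {R R' S S' : ℝ → ℝ → A}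
    (hK : Convex ℝ K) (hR : ∀ s ∈ K, ContinuousOn (R s) [[a, b]])
    (hRR' : ∀ s ∈ K, ∀ t ∈ [[a, b]], HasDerivWithinAt (R · t) (R' s t) K s)
    (hR' : ContinuousOn R'.uncurry (K ×ˢ [[a, b]]))
    (hR_adj : ∀ s ∈ K, ∀ t ∈ [[a, b]], IsSelfAdjoint (R s t))
    (hS : ContinuousOn S.uncurry (K ×ˢ [[a, b]]))
    (hJ : ∀ s ∈ K, IsJacobiBoundarySolution (R s) (S s) (S' s) a b) {s : ℝ} (hs : s ∈ K) :
    HasDerivWithinAt (S' · a) (∫ t in a..b, star (S s t) * R' s t * S s t) K s := by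
  have hincrement : ∀ σ ∈ K,
      S' σ a = S' s a + ∫ t in a..b, star (S σ t) * (R σ t - R s t) * S s t := fun σ hσ ↦ by
    have hadj : star (S' σ a) = S' σ a :=
      (hJ σ hσ).isSelfAdjoint_deriv_left (hR_adj σ hσ) (hR σ hσ)
    rw [← (hJ σ hσ).star_deriv_sub_deriv_left (hJ s hs) (hR_adj σ hσ) (hR σ hσ) (hR s hs), hadj,
      add_sub_cancel]
  exact ((hasDerivWithinAt_integral_mul_sub_mul_s1 (f := fun σ t ↦ star (S σ t)) hK hS.star hR hR'
    hRR' (hJ s hs).continuousOn hs).const_add _).congr_of_mem hincrement hs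

end Jacobi

section MatrixEntries

lemma hasDerivWithinAt_matrix {𝕜 E m n : Type*} [NontriviallyNormedField 𝕜] [NormedAddCommGroup E]
    [NormedSpace 𝕜 E] [Finite m] [Finite n] {F : 𝕜 → Matrix m n E} {F' : Matrix m n E} {K : Set 𝕜}
    {x : 𝕜} :
    HasDerivWithinAt F F' K x ↔ ∀ i j, HasDerivWithinAt (F · i j) (F' i j) K x := by
  cases nonempty_fintype m
  cases nonempty_fintype n
  exact hasDerivWithinAt_pi.trans (forall_congr' fun _ ↦ hasDerivWithinAt_pi)

lemma continuousOn_matrix {X m n R : Type*} [TopologicalSpace X] [TopologicalSpace R]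
    {F : X → Matrix m n R} {K : Set X} :
    ContinuousOn F K ↔ ∀ i j, ContinuousOn (F · i j) K :=
  continuousOn_pi.trans (forall_congr' fun _ ↦ continuousOn_pi)

variable {𝕜 ι : Type*} [RCLike 𝕜] [Fintype ι] [DecidableEq ι]

open scoped Matrix.Norms.L2Operator

/-- Restriction to real scalars of the normed `𝕜`-algebra of matrices with the `ℓ²` operator norm,
built on the existing real algebra structure so that the two real scalar actions agree. -/
noncomputable local instance realNormedAlgebraMatrix : NormedAlgebra ℝ (Matrix ι ι 𝕜) where
  norm_smul_le x M := by simpa only [RCLike.norm_ofReal, RCLike.real_smul_eq_coe_smul (K := 𝕜),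
    Real.norm_eq_abs] using norm_smul_le (x : 𝕜) M

lemma integral_matrix_apply {F : ℝ → Matrix ι ι 𝕜} {a b : ℝ}
    (hF : IntervalIntegrable F volume a b) (i j : ι) :
    (∫ t in a..b, F t) i j = ∫ t in a..b, F t i j :=
  ((entryLinearMap ℝ 𝕜 i j).toContinuousLinearMap.intervalIntegral_comp_comm hF).symm

theorem hopf_formula_derivative_step_general {K : Set ℝ} {a b : ℝ}
    {R R' S S' S'' : ℝ → ℝ → Matrix ι ι 𝕜} (hK : Convex ℝ K)
    (hR : ∀ s ∈ K, ∀ i j, ContinuousOn (R s · i j) [[a, b]])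
    (hRR' : ∀ s ∈ K, ∀ t ∈ [[a, b]], ∀ i j, HasDerivWithinAt (R · t i j) (R' s t i j) K s)
    (hR' : ∀ i j, ContinuousOn (fun p : ℝ × ℝ ↦ R' p.1 p.2 i j) (K ×ˢ [[a, b]]))
    (hR_herm : ∀ s ∈ K, ∀ t ∈ [[a, b]], (R s t).IsHermitian)
    (hS : ∀ i j, ContinuousOn (fun p : ℝ × ℝ ↦ S p.1 p.2 i j) (K ×ˢ [[a, b]]))
    (hSS' : ∀ s ∈ K, ∀ t ∈ [[a, b]], ∀ i j,
      HasDerivWithinAt (S s · i j) (S' s t i j) [[a, b]] t)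
    (hSS'' : ∀ s ∈ K, ∀ t ∈ [[a, b]], ∀ i j,
      HasDerivWithinAt (S' s · i j) (S'' s t i j) [[a, b]] t)
    (hJac : ∀ s ∈ K, ∀ t ∈ [[a, b]], S'' s t + R s t * S s t = 0)
    (hSa : ∀ s ∈ K, S s a = 1) (hSb : ∀ s ∈ K, S s b = 0) {s : ℝ} (hs : s ∈ K) (i j : ι) :
    HasDerivWithinAt (S' · a i j) (∫ t in a..b, ((S s t)ᴴ * R' s t * S s t) i j) K s := by
  have hS_cont : ContinuousOn S.uncurry (K ×ˢ [[a, b]]) := continuousOn_matrix.2 hS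
  have hR'_cont : ContinuousOn R'.uncurry (K ×ˢ [[a, b]]) := continuousOn_matrix.2 hR'
  have hJ : ∀ σ ∈ K, IsJacobiBoundarySolution (R σ) (S σ) (S' σ) a b := fun σ hσ ↦
    { hasDerivWithinAt := fun t ht ↦ hasDerivWithinAt_matrix.2 (hSS' σ hσ t ht)
      hasDerivWithinAt_deriv := fun t ht ↦
        eq_neg_of_add_eq_zero_left (hJac σ hσ t ht) ▸ hasDerivWithinAt_matrix.2 (hSS'' σ hσ t ht)
      apply_left := hSa σ hσ
      apply_right := hSb σ hσ }
  have hderiv : HasDerivWithinAt (S' · a) (∫ t in a..b, (S s t)ᴴ * R' s t * S s t) K s :=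
    hasDerivWithinAt_deriv_left_of_isJacobiBoundarySolution hK
      (fun σ hσ ↦ continuousOn_matrix.2 (hR σ hσ))
      (fun σ hσ t ht ↦ hasDerivWithinAt_matrix.2 (hRR' σ hσ t ht)) hR'_cont hR_herm hS_cont hJ hs
  have hSs := (hJ s hs).continuousOn
  have hint : IntervalIntegrable (fun t ↦ (S s t)ᴴ * R' s t * S s t) volume a b :=
    ((hSs.star.mul (continuousOn_left_of_continuousOn_prod hR'_cont hs)).mul hSs).intervalIntegrable
  rw [← integral_matrix_apply hint]
  exact hasDerivWithinAt_matrix.1 hderiv i j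

end MatrixEntries

/-- key step of the Hopf-type formula (Proposition 2.2).
Under the same hypotheses as in the stable Hopf formula, for every `s ∈ [0,1]`
the map `s ↦ ∂ₜS(s,0)` is differentiable with
`∂ₛ(∂ₜS(s,0)) = ∫₀ʳ S(s,t)ᵀ · (∂ₛR(s,t)) · S(s,t) dt` (entrywise). -/
theorem hopf_formula_derivative_step (n : ℕ) (hn : 1 ≤ n) (r : ℝ) (hr : 0 < r)
    (R S St Stt Rs : ℝ → ℝ → Matrix (Fin n) (Fin n) ℝ)
    -- R is continuously differentiable on [0,1] × [0,r], with s-partial Rs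
    (hR_cd : ∀ i j, ContDiffOn ℝ 1 (fun p : ℝ × ℝ => R p.1 p.2 i j)
      (Icc 0 1 ×ˢ Icc 0 r))
    (hRs : ∀ s ∈ Icc (0:ℝ) 1, ∀ t ∈ Icc (0:ℝ) r, ∀ i j,
      HasDerivWithinAt (fun σ => R σ t i j) (Rs s t i j) (Icc 0 1) s)
    (hRs_cont : ∀ i j, ContinuousOn (fun p : ℝ × ℝ => Rs p.1 p.2 i j)
      (Icc 0 1 ×ˢ Icc 0 r))
    -- R(s,t) is symmetric
    (hR_symm : ∀ s ∈ Icc (0:ℝ) 1, ∀ t ∈ Icc (0:ℝ) r, (R s t).IsSymm)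
    -- S is twice continuously differentiable on [0,1] × [0,r],
    -- with first and second t-partials St and Stt
    (hS_cd : ∀ i j, ContDiffOn ℝ 2 (fun p : ℝ × ℝ => S p.1 p.2 i j)
      (Icc 0 1 ×ˢ Icc 0 r))
    (hSt : ∀ s ∈ Icc (0:ℝ) 1, ∀ t ∈ Icc (0:ℝ) r, ∀ i j,
      HasDerivWithinAt (fun τ => S s τ i j) (St s t i j) (Icc 0 r) t)
    (hStt : ∀ s ∈ Icc (0:ℝ) 1, ∀ t ∈ Icc (0:ℝ) r, ∀ i j,
      HasDerivWithinAt (fun τ => St s τ i j) (Stt s t i j) (Icc 0 r) t)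
    -- the Jacobi equation and the boundary conditions
    (hJac : ∀ s ∈ Icc (0:ℝ) 1, ∀ t ∈ Icc (0:ℝ) r, Stt s t + R s t * S s t = 0)
    (hS0 : ∀ s ∈ Icc (0:ℝ) 1, S s 0 = 1)
    (hSr : ∀ s ∈ Icc (0:ℝ) 1, S s r = 0) :
    ∀ s ∈ Icc (0:ℝ) 1, ∀ i j,
      HasDerivWithinAt (fun σ => St σ 0 i j)
        (∫ t in (0:ℝ)..r, ((S s t)ᵀ * Rs s t * S s t) i j) (Icc 0 1) s := by
  intro s hs i j
  rw [← uIcc_of_le hr.le] at *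
  simpa only [conjTranspose_eq_transpose_of_trivial] using
    hopf_formula_derivative_step_general (convex_Icc 0 1)
      (fun σ hσ i j ↦ continuousOn_left_of_continuousOn_prod
        (f := fun σ t ↦ R σ t i j) (hR_cd i j).continuousOn hσ)
      hRs hRs_cont (fun σ hσ t ht ↦ (conjTranspose_eq_transpose_of_trivial _).trans
        (hR_symm σ hσ t ht)) (fun i j ↦ (hS_cd i j).continuousOn) hSt hStt hJac hS0 hSr hs i j
end

section
/- Let n ≥ 1 and 0 ≤ t < r. Let R : [0,r] → Mat_n(ℝ) be continuous with R(u) symmetric for all u, and assume that every twice continuously differentiable w : [0,r] → ℝⁿ with w''(u) + R(u)·w(u) = 0, w(t) = 0 and w(r) = 0 vanishes identically. Let Y : [0,r] → Mat_n(ℝ) be a twice continuously differentiable solution of Y'' + R·Y = 0 with Y(0) = Id, Y(r) = 0, and suppose Y(t) is invertible. Let Z : [0, r−t] → Mat_n(ℝ) be a twice continuously differentiable solution of Z''(y) + R(t+y)·Z(y) = 0 with Z(0) = Id and Z(r−t) = 0. Then Z(y) = Y(t+y)·Y(t)⁻¹ for all y ∈ [0, r−t]; in particular Z'(0) = Y'(t)·Y(t)⁻¹.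 -/
open Matrix MeasureTheory Set

/-!
Both `Z(y)` and `Y(t + y)` solve the same linear second order equation on `[0, r - t]` and vanish
at the right end point, where their values and first derivatives determine them. The derivative
`Y'(r)` is left regular: if `Y'(r) c = Y'(r) d`, then `Y c` and `Y d` have the same Cauchy data at
`r`, so `c = Y(0) c = Y(0) d = d`. In a right Artinian ring, such as a matrix algebra, it is
therefore a unit, and for `c = Y'(r)⁻¹ Z'(r - t)` the solutions `Z(y)` and `Y(t + y) c` have the
same Cauchy data at `y = r - t`. Hence they coincide together with their derivatives, and `y = 0`
gives `1 = Y(t) c`.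
-/

lemma lipschitzWith_prodMk_snd_neg_smul_fst {A E : Type*} [SeminormedRing A]
    [SeminormedAddCommGroup E] [Module A E] [IsBoundedSMul A E] (x : A) :
    LipschitzWith (max 1 ‖x‖₊) fun p : E × E => (p.2, -(x • p.1)) := by
  have hsmul : LipschitzWith ‖x‖₊ fun p : E × E => x • p.1 :=
    ((lipschitzWith_smul x).comp LipschitzWith.prod_fst).weaken (mul_one _).le
  exact LipschitzWith.prod_snd.prodMk hsmul.neg

section JacobiField

variable {A E : Type*} [NormedAddCommGroup E] [NormedSpace ℝ E]

section SMul

variable [SMul A E] {R : ℝ → A} {w w' : ℝ → E} {s : Set ℝ} {a b : ℝ}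

/-- A solution `w` on `s` of the Jacobi equation `w'' + R w = 0`, bundled with its derivative `w'`.
Taking `E = A`, with `A` acting on itself by left multiplication, gives Jacobi tensors. -/
structure IsJacobiField (R : ℝ → A) (w w' : ℝ → E) (s : Set ℝ) : Prop where
  hasDerivWithinAt : ∀ u ∈ s, HasDerivWithinAt w (w' u) s u
  hasDerivWithinAt_deriv : ∀ u ∈ s, HasDerivWithinAt w' (-(R u • w u)) s u

namespace IsJacobiField

lemma comp_const_add (hw : IsJacobiField R w w' s) {c : ℝ} {s' : Set ℝ}
    (hs : MapsTo (c + ·) s' s) :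
    IsJacobiField (fun u => R (c + u)) (fun u => w (c + u)) (fun u => w' (c + u)) s' := by
  have hshift (u : ℝ) : HasDerivWithinAt (c + ·) 1 s' u := (hasDerivWithinAt_id u s').const_add c
  constructor <;> intro u hu
  · simpa [Function.comp_def] using
      (hw.hasDerivWithinAt _ (hs hu)).scomp u (hshift u) hs
  · simpa [Function.comp_def] using
      (hw.hasDerivWithinAt_deriv _ (hs hu)).scomp u (hshift u) hs

lemma continuousOn_prodMk (hw : IsJacobiField R w w' s) :
    ContinuousOn (fun u => (w u, w' u)) s := fun u hu =>
  ((hw.hasDerivWithinAt u hu).prodMk (hw.hasDerivWithinAt_deriv u hu)).continuousWithinAt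

lemma hasDerivWithinAt_prodMk_Iic (hw : IsJacobiField R w w' (Icc a b)) {u : ℝ}
    (hu : u ∈ Ioc a b) :
    HasDerivWithinAt (fun v => (w v, w' v)) (w' u, -(R u • w u)) (Iic u) u := by
  have hmem : Icc a b ∈ nhdsWithin u (Iic u) :=
    Filter.mem_of_superset (Icc_mem_nhdsLE hu.1) (Icc_subset_Icc_right hu.2)
  have hu' := Ioc_subset_Icc_self hu
  exact ((hw.hasDerivWithinAt u hu').prodMk
    (hw.hasDerivWithinAt_deriv u hu')).mono_of_mem_nhdsWithin hmem

end IsJacobiField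

end SMul

variable [SeminormedRing A] [Module A E] [IsBoundedSMul A E]

theorem IsJacobiField.eqOn_Icc_of_right {R : ℝ → A} {w w' z z' : ℝ → E} {a b : ℝ}
    (hR : Bornology.IsBounded (R '' Icc a b))
    (hw : IsJacobiField R w w' (Icc a b)) (hz : IsJacobiField R z z' (Icc a b))
    (hb : w b = z b) (hb' : w' b = z' b) :
    EqOn w z (Icc a b) ∧ EqOn w' z' (Icc a b) := by
  obtain ⟨K, hK⟩ := hR.exists_norm_le
  have hLip (u : ℝ) (hu : u ∈ Icc a b) :
      LipschitzWith (max 1 K.toNNReal) fun p : E × E => (p.2, -(R u • p.1)) :=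
    (lipschitzWith_prodMk_snd_neg_smul_fst (R u)).weaken <|
      max_le_max_left 1 (NNReal.le_toNNReal_of_coe_le (hK _ (mem_image_of_mem R hu)))
  have heq : EqOn (fun u => (w u, w' u)) (fun u => (z u, z' u)) (Icc a b) :=
    ODE_solution_unique_of_mem_Icc_left (v := fun u p => (p.2, -(R u • p.1))) (s := fun _ => univ)
      (fun u hu => (hLip u (Ioc_subset_Icc_self hu)).lipschitzOnWith)
      hw.continuousOn_prodMk (fun _ => hw.hasDerivWithinAt_prodMk_Iic) (fun _ _ => mem_univ _)
      hz.continuousOn_prodMk (fun _ => hz.hasDerivWithinAt_prodMk_Iic) (fun _ _ => mem_univ _)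
      (Prod.ext hb hb')
  exact ⟨fun u hu => congrArg Prod.fst (heq hu), fun u hu => congrArg Prod.snd (heq hu)⟩

end JacobiField

section JacobiTensor

variable {A : Type*} [NormedRing A] [NormedAlgebra ℝ A] {R Y Y' Z Z' : ℝ → A} {s : Set ℝ}
  {a b : ℝ}

namespace IsJacobiField

lemma mul_const (hY : IsJacobiField R Y Y' s) (c : A) :
    IsJacobiField R (fun u => Y u * c) (fun u => Y' u * c) s where
  hasDerivWithinAt u hu := (hY.hasDerivWithinAt u hu).mul_const c
  hasDerivWithinAt_deriv u hu := by
    simpa [mul_assoc] using (hY.hasDerivWithinAt_deriv u hu).mul_const c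

theorem isLeftRegular_deriv_right (hab : a ≤ b) (hR : Bornology.IsBounded (R '' Icc a b))
    (hY : IsJacobiField R Y Y' (Icc a b)) (ha : IsLeftRegular (Y a)) (hb : Y b = 0) :
    IsLeftRegular (Y' b) := fun c d hcd =>
  ha <| ((hY.mul_const c).eqOn_Icc_of_right hR (hY.mul_const d) (by simp [hb]) hcd).1
    (left_mem_Icc.2 hab)

end IsJacobiField

theorem jacobi_tensor_transform_general [IsArtinianRing Aᵐᵒᵖ] {t r : ℝ} (ht : t ∈ Icc 0 r)
    (hR : Bornology.IsBounded (R '' Icc 0 r))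
    (hY : IsJacobiField R Y Y' (Icc 0 r)) (hY0 : Y 0 = 1) (hYr : Y r = 0)
    (hZ : IsJacobiField (fun y => R (t + y)) Z Z' (Icc 0 (r - t)))
    (hZ0 : Z 0 = 1) (hZrt : Z (r - t) = 0) :
    IsUnit (Y t) ∧ (∀ y ∈ Icc 0 (r - t), Z y = Y (t + y) * Ring.inverse (Y t)) ∧
      Z' 0 = Y' t * Ring.inverse (Y t) := by
  have hmaps : MapsTo (t + ·) (Icc 0 (r - t)) (Icc 0 r) := fun y hy =>
    ⟨add_nonneg ht.1 hy.1, le_sub_iff_add_le'.1 hy.2⟩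
  have hY'r : IsUnit (Y' r) := IsArtinianRing.isUnit_iff_isLeftRegular.2 <|
    hY.isLeftRegular_deriv_right (ht.1.trans ht.2) hR (hY0 ▸ isRegular_one.left) hYr
  obtain ⟨c, hc⟩ : ∃ c, Z' (r - t) = Y' r * c :=
    ⟨Ring.inverse (Y' r) * Z' (r - t), (Ring.mul_inverse_cancel_left _ _ hY'r).symm⟩
  have hR_shift : Bornology.IsBounded ((fun y => R (t + y)) '' Icc 0 (r - t)) :=
    hR.subset <| image_subset_iff.2 fun y hy => mem_image_of_mem R (hmaps hy)
  obtain ⟨hZY, hZY'⟩ := hZ.eqOn_Icc_of_right hR_shift ((hY.comp_const_add hmaps).mul_const c)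
    (by simp [hYr, hZrt]) (by simpa using hc)
  have h0 : (0 : ℝ) ∈ Icc 0 (r - t) := left_mem_Icc.2 (sub_nonneg.2 ht.2)
  have hYtc : Y t * c = 1 := by simpa [hZ0] using (hZY h0).symm
  have : IsDedekindFiniteMonoid A := MulOpposite.isDedekindFiniteMonoid_iff.1 inferInstance
  have hYt : IsUnit (Y t) := IsUnit.of_mul_eq_one c hYtc
  have hc_inv : Ring.inverse (Y t) = c := by
    simpa using (Ring.inverse_mul_eq_iff_eq_mul _ 1 c hYt).2 hYtc.symm
  rw [hc_inv]
  exact ⟨hYt, hZY, by simpa using hZY' h0⟩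

end JacobiTensor

section Matrix

open scoped Matrix.Norms.Operator

lemma IsJacobiField.of_entries {ι α : Type*} [Fintype ι] [NonUnitalNormedRing α]
    [NormedSpace ℝ α] {R Y Y' Y'' : ℝ → Matrix ι ι α} {s : Set ℝ}
    (hY' : ∀ u ∈ s, ∀ i j, HasDerivWithinAt (fun x => Y x i j) (Y' u i j) s u)
    (hY'' : ∀ u ∈ s, ∀ i j, HasDerivWithinAt (fun x => Y' x i j) (Y'' u i j) s u)
    (hode : ∀ u ∈ s, Y'' u + R u * Y u = 0) : IsJacobiField R Y Y' s where
  hasDerivWithinAt u hu :=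
    hasDerivWithinAt_pi.2 fun i => hasDerivWithinAt_pi.2 fun j => hY' u hu i j
  hasDerivWithinAt_deriv u hu := by
    rw [smul_eq_mul, ← eq_neg_of_add_eq_zero_left (hode u hu)]
    exact hasDerivWithinAt_pi.2 fun i => hasDerivWithinAt_pi.2 fun j => hY'' u hu i j

lemma isBounded_image_of_continuousOn_entries {ι κ α X : Type*} [Fintype ι] [Fintype κ]
    [SeminormedAddCommGroup α] [TopologicalSpace X] {M : X → Matrix ι κ α} {s : Set X}
    (hs : IsCompact s) (hM : ∀ i j, ContinuousOn (fun x => M x i j) s) :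
    Bornology.IsBounded (M '' s) :=
  (hs.image_of_continuousOn (continuousOn_pi.2 fun i => continuousOn_pi.2 (hM i))).isBounded

end Matrix

/-- matrix form of identity (c1) of Lemma 2.4:
if there are no conjugate points between `t` and `r` (i.e. every solution of
`w'' + R·w = 0` vanishing at `t` and `r` vanishes identically), `Y` solves the
matrix Jacobi equation with `Y(0) = Id`, `Y(r) = 0`, `Y(t)` invertible, and `Z`
solves `Z''(y) + R(t+y)·Z(y) = 0` with `Z(0) = Id`, `Z(r−t) = 0`, then
`Z(y) = Y(t+y)·Y(t)⁻¹` for all `y ∈ [0, r−t]`; in particular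
`Z'(0) = Y'(t)·Y(t)⁻¹`. -/
theorem jacobi_tensor_transform (n : ℕ) (hn : 1 ≤ n) (t r : ℝ)
    (ht : 0 ≤ t) (htr : t < r)
    (R Y Y' Y'' Z Z' Z'' : ℝ → Matrix (Fin n) (Fin n) ℝ)
    -- R is continuous and symmetric on [0,r]
    (hRcont : ∀ i j, ContinuousOn (fun u => R u i j) (Icc 0 r))
    (hRsymm : ∀ u ∈ Icc (0:ℝ) r, (R u).IsSymm)
    -- no conjugate points between t and r: every C² vector-valued solution of
    -- w'' + R·w = 0 on [0,r] vanishing at t and r vanishes identically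
    (hnoconj : ∀ w w₁ w₂ : ℝ → Fin n → ℝ,
      (∀ u ∈ Icc (0:ℝ) r, ∀ i, HasDerivWithinAt (fun x => w x i) (w₁ u i) (Icc 0 r) u) →
      (∀ u ∈ Icc (0:ℝ) r, ∀ i, HasDerivWithinAt (fun x => w₁ x i) (w₂ u i) (Icc 0 r) u) →
      (∀ i, ContinuousOn (fun u => w₂ u i) (Icc 0 r)) →
      (∀ u ∈ Icc (0:ℝ) r, w₂ u + (R u).mulVec (w u) = 0) →
      w t = 0 → w r = 0 → ∀ u ∈ Icc (0:ℝ) r, w u = 0)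
    -- Y is a twice continuously differentiable solution on [0,r] with
    -- Y(0) = Id, Y(r) = 0 and Y(t) invertible
    (hY' : ∀ u ∈ Icc (0:ℝ) r, ∀ i j,
      HasDerivWithinAt (fun x => Y x i j) (Y' u i j) (Icc 0 r) u)
    (hY'' : ∀ u ∈ Icc (0:ℝ) r, ∀ i j,
      HasDerivWithinAt (fun x => Y' x i j) (Y'' u i j) (Icc 0 r) u)
    (hY''cont : ∀ i j, ContinuousOn (fun u => Y'' u i j) (Icc 0 r))
    (hYODE : ∀ u ∈ Icc (0:ℝ) r, Y'' u + R u * Y u = 0)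
    (hY0 : Y 0 = 1) (hYr : Y r = 0) (hYt : IsUnit (Y t))
    -- Z is a twice continuously differentiable solution of the shifted
    -- equation on [0, r−t] with Z(0) = Id, Z(r−t) = 0
    (hZ' : ∀ y ∈ Icc (0:ℝ) (r - t), ∀ i j,
      HasDerivWithinAt (fun x => Z x i j) (Z' y i j) (Icc 0 (r - t)) y)
    (hZ'' : ∀ y ∈ Icc (0:ℝ) (r - t), ∀ i j,
      HasDerivWithinAt (fun x => Z' x i j) (Z'' y i j) (Icc 0 (r - t)) y)
    (hZ''cont : ∀ i j, ContinuousOn (fun y => Z'' y i j) (Icc 0 (r - t)))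
    (hZODE : ∀ y ∈ Icc (0:ℝ) (r - t), Z'' y + R (t + y) * Z y = 0)
    (hZ0 : Z 0 = 1) (hZrt : Z (r - t) = 0) :
    (∀ y ∈ Icc (0:ℝ) (r - t), Z y = Y (t + y) * (Y t)⁻¹) ∧
      Z' 0 = Y' t * (Y t)⁻¹ := by
  have := IsArtinianRing.of_finite ℝ (Matrix (Fin n) (Fin n) ℝ)ᵐᵒᵖ
  rw [Matrix.nonsing_inv_eq_ringInverse]
  open scoped Matrix.Norms.Operator in
  exact (jacobi_tensor_transform_general ⟨ht, htr.le⟩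
    (isBounded_image_of_continuousOn_entries isCompact_Icc hRcont)
    (.of_entries hY' hY'' hYODE) hY0 hYr (.of_entries hZ' hZ'' hZODE) hZ0 hZrt).2
end

section
/- Let n ≥ 1, a > 0, r > 0, and let S : [0,r] → Mat_n(ℝ) be continuous with S(u) invertible and ‖S(u)‖ ≤ a for all u ∈ [0,r]. Then the symmetric matrix M := ∫₀ʳ (S(u)ᵀ·S(u))⁻¹ du is positive definite and ‖M⁻¹‖ ≤ a²/r. -/
/-!
A lower bound for a strictly positive element is a lower bound for its spectrum, and so is the same
as an upper bound for its inverse. Hence `‖SᴴS‖ ≤ a²` gives `(SᴴS)⁻¹ ≥ a⁻²` pointwise, integration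
preserves the order and gives `M ≥ r / a²`, and inverting once more gives `‖M⁻¹‖ ≤ a² / r`.
-/

open Matrix MeasureTheory Set

/-- The operator norm of a real `n × n` matrix with respect to the Euclidean
norm on `ℝⁿ`. -/
noncomputable def opNorm {n : ℕ} (A : Matrix (Fin n) (Fin n) ℝ) : ℝ :=
  ‖Matrix.toEuclideanCLM (𝕜 := ℝ) A‖

open scoped Ring

theorem continuousOn_ringInverse {X R : Type*} [TopologicalSpace X] [NormedRing R]
    [HasSummableGeomSeries R] {f : X → R} {s : Set X} (hf : ContinuousOn f s)
    (hunit : ∀ x ∈ s, IsUnit (f x)) : ContinuousOn (fun x => (f x)⁻¹ʳ) s := fun x hx =>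
  (NormedRing.inverse_continuousAt (hunit x hx).unit).comp_continuousWithinAt
    (f := f) (hf x hx)

section IsometricCFC

-- Satisfied by unital C⋆-algebras and by square matrices over `ℝ` with the `L²` operator norm.
variable {A : Type*} [NormedRing A] [StarRing A] [NormedAlgebra ℝ A] [PartialOrder A]
  [StarOrderedRing A] [IsometricContinuousFunctionalCalculus ℝ A IsSelfAdjoint]

theorem le_algebraMap_of_norm_le {b : A} {c : ℝ} (hb : IsSelfAdjoint b) (h : ‖b‖ ≤ c) :
    b ≤ algebraMap ℝ A c :=
  le_algebraMap_of_spectrum_le fun _ hx =>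
    (Real.le_norm_self _).trans <|
      (IsometricContinuousFunctionalCalculus.norm_spectrum_le b hx).trans h

variable [NonnegSpectrumClass ℝ A]

theorem norm_le_of_nonneg_of_le_algebraMap {b : A} {c : ℝ} (hc : 0 ≤ c) (hb : 0 ≤ b)
    (h : b ≤ algebraMap ℝ A c) : ‖b‖ ≤ c := by
  have hbsa : IsSelfAdjoint b := .of_nonneg hb
  rw [← cfc_id ℝ b]
  refine norm_cfc_le hc fun x hx => ?_
  rw [id, Real.norm_of_nonneg (spectrum_nonneg_of_nonneg hb hx)]
  exact (le_algebraMap_iff_spectrum_le hbsa).mp h x hx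

theorem algebraMap_inv_le_ringInverse {b : A} {c : ℝ} (hb : IsStrictlyPositive b)
    (h : ‖b‖ ≤ c) : algebraMap ℝ A c⁻¹ ≤ b⁻¹ʳ := by
  have hbsa : IsSelfAdjoint b := .of_nonneg hb.nonneg
  rw [← cfc_ringInverse_id (R := ℝ) b hb.isUnit]
  refine algebraMap_le_cfc _ _ _ (fun x hx => ?_) ?_
  · have hx0 : 0 < x := hb.spectrum_pos hx
    gcongr
    exact (le_algebraMap_iff_spectrum_le hbsa).mp (le_algebraMap_of_norm_le hbsa h) x hx
  · exact continuousOn_inv₀.mono fun x hx => (hb.spectrum_pos hx).ne'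

variable [StarModule ℝ A]

theorem isStrictlyPositive_of_algebraMap_le {b : A} {c : ℝ} (hc : 0 < c)
    (h : algebraMap ℝ A c ≤ b) : IsStrictlyPositive b := by
  have hb : 0 ≤ b := (isStrictlyPositive_algebraMap hc).nonneg.trans h
  have hbsa : IsSelfAdjoint b := .of_nonneg hb
  rw [StarOrderedRing.isStrictlyPositive_iff_spectrum_pos (R := ℝ) b]
  exact fun x hx => hc.trans_le ((algebraMap_le_iff_le_spectrum hbsa).mp h x hx)

theorem norm_ringInverse_le_inv {b : A} {c : ℝ} (hc : 0 < c) (h : algebraMap ℝ A c ≤ b) :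
    ‖b⁻¹ʳ‖ ≤ c⁻¹ := by
  have hb : IsStrictlyPositive b := isStrictlyPositive_of_algebraMap_le hc h
  have hbsa : IsSelfAdjoint b := .of_nonneg hb.nonneg
  rw [← cfc_ringInverse_id (R := ℝ) b hb.isUnit]
  refine norm_cfc_le (inv_nonneg.mpr hc.le) fun x hx => ?_
  rw [norm_inv, Real.norm_of_nonneg (hb.spectrum_pos hx).le]
  gcongr
  exact (algebraMap_le_iff_le_spectrum hbsa).mp h x hx

theorem nonneg_iff_isSelfAdjoint_and_norm_algebraMap_norm_sub_le {b : A} :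
    0 ≤ b ↔ IsSelfAdjoint b ∧ ‖algebraMap ℝ A ‖b‖ - b‖ ≤ ‖b‖ := by
  constructor
  · intro hb
    have hbsa : IsSelfAdjoint b := .of_nonneg hb
    exact ⟨hbsa, norm_le_of_nonneg_of_le_algebraMap (norm_nonneg b)
      (sub_nonneg.mpr (le_algebraMap_of_norm_le hbsa le_rfl)) (sub_le_self _ hb)⟩
  · rintro ⟨hbsa, h⟩
    have hsub : IsSelfAdjoint (algebraMap ℝ A ‖b‖ - b) :=
      (IsSelfAdjoint.algebraMap A (.all _)).sub hbsa
    exact (sub_le_self_iff _).mp (le_algebraMap_of_norm_le hsub h)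

theorem orderClosedTopology_of_isometricCFC [ContinuousStar A] : OrderClosedTopology A := by
  refine ⟨isClosed_le_of_isClosed_nonneg ?_⟩
  simp only [nonneg_iff_isSelfAdjoint_and_norm_algebraMap_norm_sub_le, IsSelfAdjoint,
    Set.ofPred_and]
  exact (isClosed_eq continuous_star continuous_id).inter (isClosed_le (by fun_prop) (by fun_prop))

theorem algebraMap_le_integral [ContinuousStar A] [CompleteSpace A] {X : Type*}
    [MeasurableSpace X] {μ : Measure X} [IsFiniteMeasure μ] {f : X → A} {c : ℝ}
    (hf : Integrable f μ) (h : ∀ᵐ x ∂μ, algebraMap ℝ A c ≤ f x) :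
    algebraMap ℝ A (μ.real univ * c) ≤ ∫ x, f x ∂μ := by
  have : OrderClosedTopology A := orderClosedTopology_of_isometricCFC
  calc algebraMap ℝ A (μ.real univ * c) = ∫ _, algebraMap ℝ A c ∂μ := by
        rw [integral_const, map_mul, Algebra.smul_def]
    _ ≤ ∫ x, f x ∂μ := integral_mono_ae (integrable_const _) hf h

theorem integral_inverse_posdef_bound_general [NormedStarGroup A] [CompleteSpace A]
    {a p q : ℝ} (ha : 0 < a) (hpq : p < q) {S : ℝ → A} (hcont : ContinuousOn S (Icc p q))
    (hunit : ∀ u ∈ Icc p q, IsUnit (S u)) (hbound : ∀ u ∈ Icc p q, ‖S u‖ ≤ a) :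
    IsStrictlyPositive (∫ u in p..q, (star (S u) * S u)⁻¹ʳ) ∧
      ‖(∫ u in p..q, (star (S u) * S u)⁻¹ʳ)⁻¹ʳ‖ ≤ a ^ 2 / (q - p) := by
  have hpos : ∀ u ∈ Icc p q, IsStrictlyPositive (star (S u) * S u) := fun u hu =>
    ((hunit u hu).star.mul (hunit u hu)).isStrictlyPositive (star_mul_self_nonneg (S u))
  have hnorm : ∀ u ∈ Icc p q, ‖star (S u) * S u‖ ≤ a ^ 2 := fun u hu =>
    calc ‖star (S u) * S u‖ ≤ ‖S u‖ * ‖S u‖ := by simpa using norm_mul_le (star (S u)) (S u)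
      _ ≤ a ^ 2 := by rw [← sq]; gcongr; exact hbound u hu
  have hint : IntegrableOn (fun u => (star (S u) * S u)⁻¹ʳ) (Icc p q) :=
    (continuousOn_ringInverse (hcont.star.mul hcont)
      fun u hu => (hpos u hu).isUnit).integrableOn_Icc
  have hlower : algebraMap ℝ A ((q - p) * (a ^ 2)⁻¹) ≤ ∫ u in p..q, (star (S u) * S u)⁻¹ʳ := by
    rw [intervalIntegral.integral_of_le hpq.le, ← integral_Icc_eq_integral_Ioc]
    simpa [hpq.le] using algebraMap_le_integral hint <|
      ae_restrict_of_forall_mem measurableSet_Icc fun u hu =>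
        algebraMap_inv_le_ringInverse (hpos u hu) (hnorm u hu)
  have hc : 0 < (q - p) * (a ^ 2)⁻¹ := mul_pos (sub_pos.mpr hpq) (by positivity)
  refine ⟨isStrictlyPositive_of_algebraMap_le hc hlower, ?_⟩
  simpa [div_eq_mul_inv, mul_comm] using norm_ringInverse_le_inv hc hlower

end IsometricCFC

open scoped Matrix.Norms.L2Operator MatrixOrder

theorem opNorm_eq_norm {n : ℕ} (A : Matrix (Fin n) (Fin n) ℝ) : opNorm A = ‖A‖ := rfl

theorem of_intervalIntegral_apply {m n : Type*} [Fintype m] [Fintype n] [DecidableEq n]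
    {μ : Measure ℝ} {p q : ℝ} {f : ℝ → Matrix m n ℝ} (hf : IntervalIntegrable f μ p q) :
    (Matrix.of fun i j => ∫ u in p..q, f u i j ∂μ) = ∫ u in p..q, f u ∂μ := by
  ext i j
  exact (Matrix.entryLinearMap ℝ ℝ i j).toContinuousLinearMap.intervalIntegral_comp_comm hf

/-- computational core of Lemma 4.3: if `S : [0,r] → Mat_n(ℝ)` is
continuous with `S(u)` invertible and `‖S(u)‖ ≤ a`, then the symmetric matrix
`M = ∫₀ʳ (S(u)ᵀ·S(u))⁻¹ du` is positive definite and `‖M⁻¹‖ ≤ a²/r`. -/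
theorem integral_inverse_posdef_bound (n : ℕ) (hn : 1 ≤ n) (a r : ℝ)
    (ha : 0 < a) (hr : 0 < r)
    (S : ℝ → Matrix (Fin n) (Fin n) ℝ)
    (hScont : ∀ i j, ContinuousOn (fun u => S u i j) (Icc 0 r))
    (hSinv : ∀ u ∈ Icc (0:ℝ) r, IsUnit (S u))
    (hSbound : ∀ u ∈ Icc (0:ℝ) r, opNorm (S u) ≤ a)
    (M : Matrix (Fin n) (Fin n) ℝ)
    (hM : M = Matrix.of fun i j => ∫ u in (0:ℝ)..r, ((S u)ᵀ * S u)⁻¹ i j) :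
    M.PosDef ∧ opNorm M⁻¹ ≤ a ^ 2 / r := by
  have hcont : ContinuousOn S (Icc 0 r) := continuousOn_pi.2 fun i => continuousOn_pi.2 (hScont i)
  have hint : IntervalIntegrable (fun u => (star (S u) * S u)⁻¹ʳ) volume 0 r :=
    ContinuousOn.intervalIntegrable_of_Icc hr.le <|
      continuousOn_ringInverse (hcont.star.mul hcont) fun u hu =>
        (hSinv u hu).star.mul (hSinv u hu)
  have hMint : M = ∫ u in (0:ℝ)..r, (star (S u) * S u)⁻¹ʳ := by
    rw [hM, ← of_intervalIntegral_apply hint]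
    simp only [← nonsing_inv_eq_ringInverse, star_eq_conjTranspose,
      conjTranspose_eq_transpose_of_trivial]
  rw [hMint, ← isStrictlyPositive_iff_posDef, nonsing_inv_eq_ringInverse, opNorm_eq_norm]
  simpa only [sub_zero] using integral_inverse_posdef_bound_general ha hr hcont hSinv hSbound
end

section
/- For every n ≥ 1, ρ > 0 and C₁ > 0 there exists a₂ > 0, depending only on ρ and C₁, with the following property. Let r > 1 and let S : (−∞, r) → Mat_n(ℝ) be continuous with S(u) invertible for every u, such that: (i) ‖S(u)‖ ≤ C₁ for all u ∈ [0,1]; (ii) for every t ∈ (−∞, r) the improper integral M(t) := ∫_{−∞}^{t} (S(u)ᵀ·S(u))⁻¹ du converges and M(t) is invertible; (iii) for every t ∈ [0, r) the symmetric matrix (S(t)⁻¹)ᵀ · M(t)⁻¹ · S(t)⁻¹ − ρ·Id is positive semidefinite. Then ‖S(t)x‖ ≤ a₂ · e^{−ρt/2} · ‖x‖ for all t ∈ [0, r) and all x ∈ ℝⁿ. -/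
/-!
Put `P u = (S(u)ᵀ S(u))⁻¹`, so that `⟨P u z, z⟩ = ‖(S(u)ᵀ)⁻¹ z‖²` and `M t = ∫_{-∞}^t P`.
Hypothesis (iii) says `ρ M(t) ≤ P t` as quadratic forms, so for fixed `z` the function
`f t = ⟨M t z, z⟩` satisfies the integral Grönwall inequality `f(t) ≥ f(1) + ρ ∫_1^t f` and hence
grows at least like `e^{ρ(t - 1)}` from its value at `1`. A bound `‖S(u)‖ ≤ C` amounts to
`‖z‖² ≤ C² ⟨P u z, z⟩` for all `z`. On `[0, 1]` this gives `f(1) ≥ C⁻² ‖z‖²`; read backwards at `t`,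
where `⟨P t z, z⟩ ≥ ρ f(t)`, it turns the growth of `f` into the decay of `‖S(t)‖`.
-/

open Matrix MeasureTheory Set

/-- The Euclidean norm on `ℝⁿ`. -/
noncomputable def euclNorm {n : ℕ} (x : Fin n → ℝ) : ℝ :=
  Real.sqrt (∑ i, x i ^ 2)

open scoped InnerProductSpace Ring

section Gronwall

lemma exp_mul_le_of_mul_le_hasDerivAt {g g' : ℝ → ℝ} {a b K : ℝ} (hab : a ≤ b)
    (hg : ContinuousOn g (Icc a b)) (hg' : ∀ s ∈ Ioo a b, HasDerivAt g (g' s) s)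
    (hK : ∀ s ∈ Ioo a b, K * g s ≤ g' s) :
    Real.exp (K * (b - a)) * g a ≤ g b := by
  have hderiv : ∀ s ∈ Ioo a b, HasDerivAt (fun s => Real.exp (K * (b - s)) * g s)
      (Real.exp (K * (b - s)) * (g' s - K * g s)) s := fun s hs =>
    (((((hasDerivAt_id s).const_sub b).const_mul K).exp).mul (hg' s hs)).congr_deriv
      (by simp only [id_eq]; ring)
  have hmono : MonotoneOn (fun s => Real.exp (K * (b - s)) * g s) (Icc a b) := by
    refine monotoneOn_of_hasDerivWithinAt_nonneg (convex_Icc a b) (by fun_prop)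
      (f' := fun s => Real.exp (K * (b - s)) * (g' s - K * g s)) ?_ ?_ <;>
      rw [interior_Icc] <;> intro s hs
    · exact (hderiv s hs).hasDerivWithinAt
    · exact mul_nonneg (Real.exp_pos _).le (sub_nonneg.2 (hK s hs))
  simpa using hmono (left_mem_Icc.2 hab) (right_mem_Icc.2 hab) hab

lemma exp_mul_le_of_add_mul_integral_le {f : ℝ → ℝ} {a b K : ℝ} (hK : 0 ≤ K) (hab : a ≤ b)
    (hf : ContinuousOn f (Icc a b))
    (h : ∀ s ∈ Icc a b, f a + K * ∫ u in a..s, f u ≤ f s) :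
    Real.exp (K * (b - a)) * f a ≤ f b := by
  have hint : IntegrableOn f (uIcc a b) := by
    rw [uIcc_of_le hab]
    exact hf.integrableOn_Icc
  have hcont : ContinuousOn (fun s => f a + K * ∫ u in a..s, f u) (Icc a b) := by
    have := intervalIntegral.continuousOn_primitive_interval hint
    rw [uIcc_of_le hab] at this
    fun_prop
  have hderiv : ∀ s ∈ Ioo a b, HasDerivAt (fun s => f a + K * ∫ u in a..s, f u) (K * f s) s := by
    intro s hs
    have hfs : ContinuousOn f (uIcc a s) := by
      rw [uIcc_of_le hs.1.le]
      exact hf.mono (Icc_subset_Icc_right hs.2.le)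
    refine ((intervalIntegral.integral_hasDerivAt_right hfs.intervalIntegrable ?_ ?_).const_mul
      K).const_add (f a)
    · exact (hf.mono Ioo_subset_Icc_self).stronglyMeasurableAtFilter isOpen_Ioo s hs
    · exact hf.continuousAt (Icc_mem_nhds hs.1 hs.2)
  calc Real.exp (K * (b - a)) * f a
      = Real.exp (K * (b - a)) * (f a + K * ∫ u in a..a, f u) := by simp
    _ ≤ f a + K * ∫ u in a..b, f u :=
      exp_mul_le_of_mul_le_hasDerivAt hab hcont hderiv fun s hs =>
        mul_le_mul_of_nonneg_left (h s (Ioo_subset_Icc_self hs)) hK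
    _ ≤ f b := h b (right_mem_Icc.2 hab)

lemma exp_mul_integral_Iic_le {p : ℝ → ℝ} {a b K : ℝ} (hK : 0 ≤ K) (hab : a ≤ b)
    (hp : IntegrableOn p (Iic b)) (h : ∀ s ∈ Icc a b, K * ∫ u in Iic s, p u ≤ p s) :
    Real.exp (K * (b - a)) * ∫ u in Iic a, p u ≤ ∫ u in Iic b, p u := by
  have hpIic : ∀ s ≤ b, IntegrableOn p (Iic s) := fun s hs => hp.mono_set (Iic_subset_Iic.2 hs)
  have hpIcc : IntegrableOn p (Icc a b) := hp.mono_set Icc_subset_Iic_self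
  have hprim : ∀ s ∈ Icc a b,
      ∫ u in Iic s, p u = (∫ u in Iic a, p u) + ∫ u in a..s, p u := fun s hs => by
    rw [← intervalIntegral.integral_Iic_sub_Iic (hpIic a hab) (hpIic s hs.2), add_sub_cancel]
  have hcont : ContinuousOn (fun s => ∫ u in Iic s, p u) (Icc a b) := by
    have := intervalIntegral.continuousOn_primitive_interval (a := a) (b := b) (f := p)
      (by rwa [uIcc_of_le hab])
    rw [uIcc_of_le hab] at this
    exact (continuousOn_const.add this).congr hprim
  refine exp_mul_le_of_add_mul_integral_le hK hab hcont fun s hs => ?_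
  have hsub : Icc a s ⊆ Icc a b := Icc_subset_Icc_right hs.2
  rw [hprim s hs, ← intervalIntegral.integral_const_mul]
  gcongr
  refine intervalIntegral.integral_mono_on hs.1 ?_ ?_ fun u hu => h u (hsub hu)
  · exact ((hcont.mono hsub).intervalIntegrable_of_Icc hs.1).const_mul K
  · exact (intervalIntegrable_iff_integrableOn_Icc_of_le hs.1).2 (hpIcc.mono_set hsub)

end Gronwall

section Inverse

lemma map_ringInverse {R R' : Type*} [MonoidWithZero R] [MonoidWithZero R'] (e : R ≃* R')
    (a : R) : e a⁻¹ʳ = (e a)⁻¹ʳ := by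
  by_cases ha : IsUnit a
  · rw [← one_mul (e a)⁻¹ʳ, Ring.eq_mul_inverse_iff_mul_eq _ _ _ (ha.map e), ← map_mul,
      Ring.inverse_mul_cancel a ha, map_one]
  · rw [Ring.inverse_non_unit a ha, Ring.inverse_non_unit _ (by simpa using ha), map_zero]

variable {R E : Type*} [Semiring R] [TopologicalSpace E] [AddCommMonoid E] [Module R E]
  {A : E →L[R] E}

lemma inverse_apply_apply_of_isUnit (hA : IsUnit A) (x : E) : A⁻¹ʳ (A x) = x := by
  rw [← mul_apply_eq_comp, Ring.inverse_mul_cancel A hA, one_apply_eq_self]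

lemma apply_inverse_apply_of_isUnit (hA : IsUnit A) (x : E) : A (A⁻¹ʳ x) = x := by
  rw [← mul_apply_eq_comp, Ring.mul_inverse_cancel A hA, one_apply_eq_self]

end Inverse

section Operator

variable {H : Type*} [NormedAddCommGroup H] [InnerProductSpace ℝ H] [CompleteSpace H]
  {A B : H →L[ℝ] H}

lemma inner_inverse_star_mul_self_apply (hA : IsUnit A) (z : H) :
    ⟪(star A * A)⁻¹ʳ z, z⟫_ℝ = ‖star A⁻¹ʳ z‖ ^ 2 := by
  rw [Ring.inverse_mul (.inr hA), Ring.inverse_star, mul_apply_eq_comp,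
    ← ContinuousLinearMap.adjoint_inner_right, ← ContinuousLinearMap.star_eq_adjoint,
    real_inner_self_eq_norm_sq]

lemma norm_le_iff_forall_sq_norm_le (hA : IsUnit A) {C : ℝ} (hC : 0 ≤ C) :
    ‖A‖ ≤ C ↔ ∀ z, ‖z‖ ^ 2 ≤ C ^ 2 * ⟪(star A * A)⁻¹ʳ z, z⟫_ℝ := by
  simp only [inner_inverse_star_mul_self_apply hA, ← mul_pow, ← Ring.inverse_star]
  rw [← norm_star, ContinuousLinearMap.opNorm_le_iff hC]
  constructor
  · intro h z
    gcongr
    simpa only [apply_inverse_apply_of_isUnit hA.star] using h ((star A)⁻¹ʳ z)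
  · intro h w
    refine (sq_le_sq₀ (by positivity) (by positivity)).1 ?_
    simpa only [inverse_apply_apply_of_isUnit hA.star] using h (star A w)

lemma mul_inner_le_of_smul_one_le (hA : IsUnit A) (hB : IsUnit B) {ρ : ℝ} (hρ : 0 ≤ ρ)
    (h : ρ • 1 ≤ star A⁻¹ʳ * B⁻¹ʳ * A⁻¹ʳ) (z : H) :
    ρ * ⟪B z, z⟫_ℝ ≤ ⟪(star A * A)⁻¹ʳ z, z⟫_ℝ := by
  have hinner : ∀ y, ⟪A y, star A⁻¹ʳ z⟫_ℝ = ⟪y, z⟫_ℝ := fun y => by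
    rw [ContinuousLinearMap.star_eq_adjoint, ContinuousLinearMap.adjoint_inner_right,
      inverse_apply_apply_of_isUnit hA]
  have hsq : ρ * ‖A (B z)‖ ^ 2 ≤ ⟪B z, z⟫_ℝ := by
    have hnonneg := ((ContinuousLinearMap.le_def _ _).1 h).inner_nonneg_right (A (B z))
    simpa only [_root_.sub_apply, _root_.smul_apply, mul_apply_eq_comp, one_apply_eq_self,
      inverse_apply_apply_of_isUnit hA, inverse_apply_apply_of_isUnit hB, inner_sub_right, hinner,
      inner_smul_right, real_inner_self_eq_norm_sq, sub_nonneg] using hnonneg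
  have hexpand : ‖ρ • A (B z) - star A⁻¹ʳ z‖ ^ 2 =
      ρ * (ρ * ‖A (B z)‖ ^ 2) - 2 * (ρ * ⟪B z, z⟫_ℝ) + ‖star A⁻¹ʳ z‖ ^ 2 := by
    rw [norm_sub_sq_real, real_inner_smul_left, hinner, norm_smul, mul_pow, Real.norm_eq_abs,
      sq_abs]
    ring
  rw [inner_inverse_star_mul_self_apply hA]
  linarith [sq_nonneg ‖ρ • A (B z) - star A⁻¹ʳ z‖, mul_le_mul_of_nonneg_left hsq hρ]

lemma sub_mul_sq_norm_le_integral_Iic {S : ℝ → H →L[ℝ] H} {a b C : ℝ}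
    (hS : ∀ u ∈ Iic b, IsUnit (S u)) (hC : ∀ u ∈ Icc a b, ‖S u‖ ≤ C) {z : H}
    (hint : IntegrableOn (fun u => ⟪(star (S u) * S u)⁻¹ʳ z, z⟫_ℝ) (Iic b)) :
    (b - a) * ‖z‖ ^ 2 ≤ C ^ 2 * ∫ u in Iic b, ⟪(star (S u) * S u)⁻¹ʳ z, z⟫_ℝ := by
  calc (b - a) * ‖z‖ ^ 2
      ≤ ‖z‖ ^ 2 * volume.real (Icc a b) := by
        rw [mul_comm, Real.volume_real_Icc]
        gcongr
        exact le_max_left _ _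
    _ ≤ ∫ u in Icc a b, C ^ 2 * ⟪(star (S u) * S u)⁻¹ʳ z, z⟫_ℝ := by
        refine setIntegral_ge_of_const_le_real measurableSet_Icc (by simp) (fun u hu => ?_)
          ((hint.mono_set Icc_subset_Iic_self).const_mul _)
        exact (norm_le_iff_forall_sq_norm_le (hS u hu.2) ((norm_nonneg _).trans (hC u hu))).1
          (hC u hu) z
    _ = C ^ 2 * ∫ u in Icc a b, ⟪(star (S u) * S u)⁻¹ʳ z, z⟫_ℝ := integral_const_mul _ _
    _ ≤ C ^ 2 * ∫ u in Iic b, ⟪(star (S u) * S u)⁻¹ʳ z, z⟫_ℝ := by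
        refine mul_le_mul_of_nonneg_left ?_ (sq_nonneg C)
        refine setIntegral_mono_set hint ?_ Icc_subset_Iic_self.eventuallyLE
        filter_upwards [ae_restrict_mem measurableSet_Iic] with u hu
        rw [inner_inverse_star_mul_self_apply (hS u hu)]
        positivity

lemma norm_le_mul_exp_of_one_le {ρ C r : ℝ} (hρ : 0 < ρ) {S M : ℝ → H →L[ℝ] H}
    (hS : ∀ u ∈ Iio r, IsUnit (S u)) (hC : ∀ u ∈ Icc (0 : ℝ) 1, ‖S u‖ ≤ C)
    (hint : ∀ t ∈ Iio r, ∀ z,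
      IntegrableOn (fun u => ⟪(star (S u) * S u)⁻¹ʳ z, z⟫_ℝ) (Iic t))
    (hM : ∀ t ∈ Iio r, ∀ z, ⟪M t z, z⟫_ℝ = ∫ u in Iic t, ⟪(star (S u) * S u)⁻¹ʳ z, z⟫_ℝ)
    (hMunit : ∀ t ∈ Iio r, IsUnit (M t))
    (hρM : ∀ t ∈ Ico 0 r, ρ • 1 ≤ star (S t)⁻¹ʳ * (M t)⁻¹ʳ * (S t)⁻¹ʳ)
    {t : ℝ} (ht : t ∈ Ico 1 r) :
    ‖S t‖ ≤ C * (√ρ)⁻¹ * Real.exp (-(ρ * (t - 1)) / 2) := by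
  have hC₀ : 0 ≤ C := (norm_nonneg _).trans (hC 0 (by simp))
  have h1r : 1 < r := ht.1.trans_lt ht.2
  have hρP : ∀ s ∈ Ico 0 r, ∀ z, ρ * ⟪M s z, z⟫_ℝ ≤ ⟪(star (S s) * S s)⁻¹ʳ z, z⟫_ℝ :=
    fun s hs => mul_inner_le_of_smul_one_le (hS s hs.2) (hMunit s hs.2) hρ.le (hρM s hs)
  have hone : ∀ z, ‖z‖ ^ 2 ≤ C ^ 2 * ⟪M 1 z, z⟫_ℝ := fun z => by
    rw [hM 1 h1r]
    simpa using sub_mul_sq_norm_le_integral_Iic (fun u hu => hS u (lt_of_le_of_lt hu h1r)) hC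
      (hint 1 h1r z)
  have hgrowth : ∀ z, Real.exp (ρ * (t - 1)) * ⟪M 1 z, z⟫_ℝ ≤ ⟪M t z, z⟫_ℝ := fun z => by
    rw [hM 1 h1r, hM t ht.2]
    refine exp_mul_integral_Iic_le hρ.le ht.1 (hint t ht.2 z) fun s hs => ?_
    have hsr : s < r := hs.2.trans_lt ht.2
    simpa only [← hM s hsr] using hρP s ⟨zero_le_one.trans hs.1, hsr⟩ z
  refine (norm_le_iff_forall_sq_norm_le (hS t ht.2) (by positivity)).2 fun z => ?_
  calc ‖z‖ ^ 2 ≤ C ^ 2 * ⟪M 1 z, z⟫_ℝ := hone z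
    _ = C ^ 2 * Real.exp (-(ρ * (t - 1))) * (Real.exp (ρ * (t - 1)) * ⟪M 1 z, z⟫_ℝ) := by
      rw [Real.exp_neg]
      field_simp
    _ ≤ C ^ 2 * Real.exp (-(ρ * (t - 1))) * ⟪M t z, z⟫_ℝ := by gcongr; exact hgrowth z
    _ = C ^ 2 * ρ⁻¹ * Real.exp (-(ρ * (t - 1))) * (ρ * ⟪M t z, z⟫_ℝ) := by field_simp
    _ ≤ C ^ 2 * ρ⁻¹ * Real.exp (-(ρ * (t - 1))) * ⟪(star (S t) * S t)⁻¹ʳ z, z⟫_ℝ := by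
      gcongr
      exact hρP t ⟨zero_le_one.trans ht.1, ht.2⟩ z
    _ = (C * (√ρ)⁻¹ * Real.exp (-(ρ * (t - 1)) / 2)) ^ 2 *
        ⟪(star (S t) * S t)⁻¹ʳ z, z⟫_ℝ := by
      rw [mul_pow, mul_pow, inv_pow, Real.sq_sqrt hρ.le, ← Real.exp_nat_mul, Nat.cast_ofNat,
        mul_div_cancel₀ _ two_ne_zero]

-- The integral defining `M` is taken weakly, through the quadratic forms it induces.
theorem exponential_decay_of_jacobi_tensor_general {ρ C r : ℝ} (hρ : 0 < ρ)
    {S M : ℝ → H →L[ℝ] H}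
    (hS : ∀ u ∈ Iio r, IsUnit (S u)) (hC : ∀ u ∈ Icc (0 : ℝ) 1, ‖S u‖ ≤ C)
    (hint : ∀ t ∈ Iio r, ∀ z,
      IntegrableOn (fun u => ⟪(star (S u) * S u)⁻¹ʳ z, z⟫_ℝ) (Iic t))
    (hM : ∀ t ∈ Iio r, ∀ z, ⟪M t z, z⟫_ℝ = ∫ u in Iic t, ⟪(star (S u) * S u)⁻¹ʳ z, z⟫_ℝ)
    (hMunit : ∀ t ∈ Iio r, IsUnit (M t))
    (hρM : ∀ t ∈ Ico 0 r, ρ • 1 ≤ star (S t)⁻¹ʳ * (M t)⁻¹ʳ * (S t)⁻¹ʳ)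
    {t : ℝ} (ht : t ∈ Ico 0 r) :
    ‖S t‖ ≤ C * max 1 (√ρ)⁻¹ * Real.exp (ρ / 2) * Real.exp (-(ρ * t) / 2) := by
  have hC₀ : 0 ≤ C := (norm_nonneg _).trans (hC 0 (by simp))
  have hexp : Real.exp (-(ρ * (t - 1)) / 2) = Real.exp (ρ / 2) * Real.exp (-(ρ * t) / 2) := by
    rw [← Real.exp_add]
    ring_nf
  rw [mul_assoc, ← hexp]
  rcases le_total t 1 with ht₁ | ht₁
  · calc ‖S t‖ ≤ C * 1 * 1 := by simpa using hC t ⟨ht.1, ht₁⟩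
      _ ≤ C * max 1 (√ρ)⁻¹ * Real.exp (-(ρ * (t - 1)) / 2) := by
        gcongr
        · exact le_max_left _ _
        · exact Real.one_le_exp (by nlinarith)
  · refine (norm_le_mul_exp_of_one_le hρ hS hC hint hM hMunit hρM ⟨ht₁, ht.2⟩).trans ?_
    gcongr
    exact le_max_right _ _

end Operator

section Matrix

variable {ι : Type*} [Fintype ι] [DecidableEq ι]

lemma toEuclideanCLM_inv {𝕜 : Type*} [RCLike 𝕜] (A : Matrix ι ι 𝕜) :
    toEuclideanCLM (𝕜 := 𝕜) A⁻¹ = (toEuclideanCLM (𝕜 := 𝕜) A)⁻¹ʳ := by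
  rw [nonsing_inv_eq_ringInverse]
  exact map_ringInverse (toEuclideanCLM (𝕜 := 𝕜) (n := ι)).toMulEquiv A

lemma toEuclideanCLM_transpose (A : Matrix ι ι ℝ) :
    toEuclideanCLM (𝕜 := ℝ) Aᵀ = star (toEuclideanCLM (𝕜 := ℝ) A) := by
  rw [← conjTranspose_eq_transpose_of_trivial, ← star_eq_conjTranspose, map_star]

lemma toEuclideanCLM_le_iff {A B : Matrix ι ι ℝ} :
    toEuclideanCLM (𝕜 := ℝ) A ≤ toEuclideanCLM (𝕜 := ℝ) B ↔ (B - A).PosSemidef := by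
  rw [ContinuousLinearMap.le_def, ← map_sub, ← ContinuousLinearMap.isPositive_toLinearMap_iff,
    coe_toEuclideanCLM_eq_toEuclideanLin, isPositive_toEuclideanLin_iff]

lemma inner_toEuclideanCLM_eq_sum (A : Matrix ι ι ℝ) (z w : EuclideanSpace ℝ ι) :
    ⟪toEuclideanCLM (𝕜 := ℝ) A z, w⟫_ℝ = ∑ i, ∑ j, w i * (A i j * z j) := by
  simp only [real_inner_comm, inner_toEuclideanCLM, dotProduct, mulVec, Finset.mul_sum]

variable {α : Type*} [MeasurableSpace α] {μ : Measure α} {P : α → Matrix ι ι ℝ}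

lemma integrable_inner_toEuclideanCLM (hP : ∀ i j, Integrable (fun u => P u i j) μ)
    (z w : EuclideanSpace ℝ ι) :
    Integrable (fun u => ⟪toEuclideanCLM (𝕜 := ℝ) (P u) z, w⟫_ℝ) μ := by
  simp only [inner_toEuclideanCLM_eq_sum]
  exact integrable_finsetSum _ fun i _ => integrable_finsetSum _ fun j _ =>
    ((hP i j).mul_const _).const_mul _

lemma inner_toEuclideanCLM_integral (hP : ∀ i j, Integrable (fun u => P u i j) μ)
    (z w : EuclideanSpace ℝ ι) :
    ⟪toEuclideanCLM (𝕜 := ℝ) (of fun i j => ∫ u, P u i j ∂μ) z, w⟫_ℝ =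
      ∫ u, ⟪toEuclideanCLM (𝕜 := ℝ) (P u) z, w⟫_ℝ ∂μ := by
  have hterm : ∀ i j, Integrable (fun u => w i * (P u i j * z j)) μ := fun i j =>
    ((hP i j).mul_const _).const_mul _
  simp only [inner_toEuclideanCLM_eq_sum, of_apply]
  rw [integral_finsetSum _ fun i _ => integrable_finsetSum _ fun j _ => hterm i j]
  refine Finset.sum_congr rfl fun i _ => ?_
  rw [integral_finsetSum _ fun j _ => hterm i j]
  simp only [integral_const_mul, integral_mul_const]

lemma euclNorm_eq_norm_toLp {n : ℕ} (x : Fin n → ℝ) : euclNorm x = ‖WithLp.toLp 2 x‖ := by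
  simp [euclNorm, EuclideanSpace.norm_eq]

lemma euclNorm_mulVec_le {n : ℕ} (A : Matrix (Fin n) (Fin n) ℝ) (x : Fin n → ℝ) :
    euclNorm (A *ᵥ x) ≤ opNorm A * euclNorm x := by
  simp only [euclNorm_eq_norm_toLp]
  exact (toEuclideanCLM (𝕜 := ℝ) A).le_opNorm (WithLp.toLp 2 x)

end Matrix

/-- analytic core of Proposition 2.5(b): for every `ρ > 0` and
`C₁ > 0` there is `a₂ > 0` (depending only on `ρ` and `C₁`) such that whenever
`r > 1` and `S : (−∞,r) → Mat_n(ℝ)` is continuous with invertible values,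
`‖S(u)‖ ≤ C₁` on `[0,1]`, the improper integrals
`M(t) = ∫_{−∞}^t (S(u)ᵀ·S(u))⁻¹ du` converge and are invertible, and
`(S(t)⁻¹)ᵀ·M(t)⁻¹·S(t)⁻¹ ≥ ρ·Id` on `[0,r)`, then
`‖S(t)x‖ ≤ a₂·e^{−ρt/2}·‖x‖` for all `t ∈ [0,r)` and `x ∈ ℝⁿ`. -/
theorem exponential_decay_of_jacobi_tensor (ρ C₁ : ℝ) (hρ : 0 < ρ) (hC₁ : 0 < C₁) :
    ∃ a₂ : ℝ, 0 < a₂ ∧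
      ∀ (n : ℕ), 1 ≤ n → ∀ (r : ℝ), 1 < r →
        ∀ S M : ℝ → Matrix (Fin n) (Fin n) ℝ,
          -- S is continuous on (−∞, r) with invertible values
          (∀ i j, ContinuousOn (fun u => S u i j) (Iio r)) →
          (∀ u ∈ Iio r, IsUnit (S u)) →
          -- (i) ‖S(u)‖ ≤ C₁ on [0,1]
          (∀ u ∈ Icc (0:ℝ) 1, opNorm (S u) ≤ C₁) →
          -- (ii) the improper integral M(t) converges and is invertible
          (∀ t ∈ Iio r,
            (∀ i j, IntegrableOn (fun u => ((S u)ᵀ * S u)⁻¹ i j) (Iic t)) ∧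
            M t = Matrix.of (fun i j => ∫ u in Iic t, ((S u)ᵀ * S u)⁻¹ i j) ∧
            IsUnit (M t)) →
          -- (iii) (S(t)⁻¹)ᵀ·M(t)⁻¹·S(t)⁻¹ − ρ·Id is positive semidefinite on [0,r)
          (∀ t ∈ Ico (0:ℝ) r,
            (((S t)⁻¹)ᵀ * (M t)⁻¹ * (S t)⁻¹
              - ρ • (1 : Matrix (Fin n) (Fin n) ℝ)).PosSemidef) →
          ∀ t ∈ Ico (0:ℝ) r, ∀ x : Fin n → ℝ,
            euclNorm ((S t).mulVec x) ≤ a₂ * Real.exp (-(ρ * t) / 2) * euclNorm x := by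
  refine ⟨C₁ * max 1 (√ρ)⁻¹ * Real.exp (ρ / 2), by positivity,
    fun n _ r _ S M _ hS hC hM hρM t ht x => ?_⟩
  let Φ := toEuclideanCLM (n := Fin n) (𝕜 := ℝ)
  have hΦ : ∀ A, (star (Φ A) * Φ A)⁻¹ʳ = Φ (Aᵀ * A)⁻¹ := fun A => by
    rw [toEuclideanCLM_inv, map_mul, toEuclideanCLM_transpose]
  have hint : ∀ s ∈ Iio r, ∀ z,
      IntegrableOn (fun u => ⟪(star (Φ (S u)) * Φ (S u))⁻¹ʳ z, z⟫_ℝ) (Iic s) := fun s hs z => by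
    simp only [hΦ]
    exact integrable_inner_toEuclideanCLM (hM s hs).1 z z
  have hinner : ∀ s ∈ Iio r, ∀ z, ⟪Φ (M s) z, z⟫_ℝ =
      ∫ u in Iic s, ⟪(star (Φ (S u)) * Φ (S u))⁻¹ʳ z, z⟫_ℝ := fun s hs z => by
    simp only [hΦ, (hM s hs).2.1]
    exact inner_toEuclideanCLM_integral (hM s hs).1 z z
  have hle : ∀ s ∈ Ico 0 r, ρ • 1 ≤ star (Φ (S s))⁻¹ʳ * (Φ (M s))⁻¹ʳ * (Φ (S s))⁻¹ʳ :=
    fun s hs => by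
      simpa [Φ, toEuclideanCLM_inv, toEuclideanCLM_transpose]
        using toEuclideanCLM_le_iff.2 (hρM s hs)
  have hdecay := exponential_decay_of_jacobi_tensor_general hρ (fun u hu => (hS u hu).map Φ) hC
    hint hinner (fun s hs => (hM s hs).2.2.map Φ) hle ht
  exact (euclNorm_mulVec_le _ _).trans (mul_le_mul_of_nonneg_right hdecay (Real.sqrt_nonneg _))
end

section
/- Let n ≥ 1 and h ∈ ℝ. Let R : ℝ → Mat_n(ℝ) be continuous, and let U, S : ℝ → Mat_n(ℝ) be continuously differentiable with U(t) and S(t) symmetric for all t, satisfying the Riccati equations U'(t) + U(t)² + R(t) = 0 and S'(t) + S(t)² + R(t) = 0 for all t ∈ ℝ, such that tr U(t) = h and tr S(t) = −h for all t ∈ ℝ, and U(t) − S(t) is positive semidefinite for all t ∈ ℝ. Then the function t ↦ det(U(t) − S(t)) is constant on ℝ. -/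
open Matrix MeasureTheory Set

/-!
The difference `D = U - S` of two solutions of the same Riccati equation solves the linear equation
`D' = -(U D + D S)`, as `U² - S² = U D + D S`. By Jacobi's formula
`(det D)' = tr (D' · adj D) = -(tr U + tr S) det D`, which vanishes because `tr U = -tr S`.
The adjugate, unlike `D⁻¹`, makes sense also where `D` is singular.
-/

theorem sub_eq_neg_mul_add_mul_neg_of_riccati {A : Type*} [NonUnitalNonAssocRing A]
    {u u' s s' r : A} (hu : u' + u * u + r = 0) (hs : s' + s * s + r = 0) :
    u' - s' = -u * (u - s) + (u - s) * -s := by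
  have hdiff : u' + u * u = s' + s * s := add_right_cancel (hu.trans hs.symm)
  calc
    u' - s' = s * s - u * u := by
      rw [sub_eq_sub_iff_add_eq_add, hdiff, add_comm]
    _ = -u * (u - s) + (u - s) * -s := by
      rw [neg_mul, mul_neg, mul_sub, sub_mul]
      abel

section Adjugate

variable {ι 𝔸 : Type*} [Fintype ι] [DecidableEq ι] [CommRing 𝔸]

theorem trace_mul_adjugate (M D : Matrix ι ι 𝔸) :
    (M * D.adjugate).trace = ∑ i, (D.updateRow i (M i)).det := by
  refine Finset.sum_congr rfl fun i _ => ?_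
  rw [← cramer_transpose_apply, cramer_eq_adjugate_mulVec, ← adjugate_transpose, mulVec_transpose]
  rfl

theorem trace_mul_add_mul_mul_adjugate (A B D : Matrix ι ι 𝔸) :
    ((A * D + D * B) * D.adjugate).trace = (A.trace + B.trace) * D.det := by
  have trace_left : (A * D * D.adjugate).trace = A.trace * D.det := by
    rw [Matrix.mul_assoc, mul_adjugate, mul_smul_one, trace_smul, smul_eq_mul, mul_comm]
  have trace_right : (D * B * D.adjugate).trace = B.trace * D.det := by
    rw [trace_mul_comm, ← Matrix.mul_assoc, adjugate_mul, smul_one_mul, trace_smul, smul_eq_mul,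
      mul_comm]
  rw [Matrix.add_mul, trace_add, trace_left, trace_right, add_mul]

end Adjugate

section Derivative

variable {ι 𝕜 𝔸 : Type*} [Fintype ι] [DecidableEq ι] [NontriviallyNormedField 𝕜]
  [NormedCommRing 𝔸] [NormedAlgebra 𝕜 𝔸] {D : 𝕜 → Matrix ι ι 𝔸} {D' : Matrix ι ι 𝔸} {t : 𝕜}

theorem hasDerivAt_det_sum_updateRow (hD : ∀ i j, HasDerivAt (fun τ => D τ i j) (D' i j) t) :
    HasDerivAt (fun τ => (D τ).det) (∑ i, ((D t).updateRow i (D' i)).det) t := by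
  let detOfRows : ContinuousMultilinearMap 𝕜 (fun _ : ι => ι → 𝔸) 𝔸 :=
    { (detRowAlternating (n := ι) (R := 𝔸)).toMultilinearMap.restrictScalars 𝕜 with
      cont := continuous_id.matrix_det }
  -- Matrices carry no global norm, so `D` is differentiated as a family of rows.
  have hrows : HasDerivAt (𝕜 := 𝕜) (F := ι → ι → 𝔸) D D' t :=
    hasDerivAt_pi.2 fun i => hasDerivAt_pi.2 (hD i)
  have hsum : detOfRows.linearDeriv (D t) D' = ∑ i, ((D t).updateRow i (D' i)).det :=
    detOfRows.linearDeriv_apply (D t) D'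
  rw [← hsum]
  exact (detOfRows.hasFDerivAt (D t)).comp_hasDerivAt t hrows

theorem hasDerivAt_det (hD : ∀ i j, HasDerivAt (fun τ => D τ i j) (D' i j) t) :
    HasDerivAt (fun τ => (D τ).det) (D' * (D t).adjugate).trace t := by
  rw [trace_mul_adjugate]
  exact hasDerivAt_det_sum_updateRow hD

theorem hasDerivAt_det_of_eq_mul_add_mul {A B : Matrix ι ι 𝔸}
    (hD : ∀ i j, HasDerivAt (fun τ => D τ i j) (D' i j) t) (hD' : D' = A * D t + D t * B) :
    HasDerivAt (fun τ => (D τ).det) ((A.trace + B.trace) * (D t).det) t := by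
  rw [← trace_mul_add_mul_mul_adjugate, ← hD']
  exact hasDerivAt_det hD

theorem hasDerivAt_det_sub_of_riccati {U S : 𝕜 → Matrix ι ι 𝔸} {R U' S' : Matrix ι ι 𝔸}
    (hU' : ∀ i j, HasDerivAt (fun τ => U τ i j) (U' i j) t)
    (hS' : ∀ i j, HasDerivAt (fun τ => S τ i j) (S' i j) t)
    (hURic : U' + U t * U t + R = 0) (hSRic : S' + S t * S t + R = 0) :
    HasDerivAt (fun τ => (U τ - S τ).det)
      (-((U t).trace + (S t).trace) * (U t - S t).det) t := by
  rw [neg_add, ← trace_neg, ← trace_neg]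
  exact hasDerivAt_det_of_eq_mul_add_mul (D := fun τ => U τ - S τ)
    (fun i j => (hU' i j).sub (hS' i j))
    (sub_eq_neg_mul_add_mul_neg_of_riccati hURic hSRic)

end Derivative

theorem det_D_constant_along_flow_general {ι 𝕜 𝔸 : Type*} [Fintype ι] [DecidableEq ι]
    [RCLike 𝕜] [NormedCommRing 𝔸] [NormedAlgebra 𝕜 𝔸] {R U U' S S' : 𝕜 → Matrix ι ι 𝔸}
    (hU' : ∀ t i j, HasDerivAt (fun τ => U τ i j) (U' t i j) t)
    (hS' : ∀ t i j, HasDerivAt (fun τ => S τ i j) (S' t i j) t)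
    (hURic : ∀ t, U' t + U t * U t + R t = 0) (hSRic : ∀ t, S' t + S t * S t + R t = 0)
    (htr : ∀ t, (U t).trace + (S t).trace = 0) (t₁ t₂ : 𝕜) :
    (U t₁ - S t₁).det = (U t₂ - S t₂).det := by
  have hderiv (t : 𝕜) : HasDerivAt (fun τ => (U τ - S τ).det) 0 t := by
    simpa only [htr, neg_zero, zero_mul] using
      hasDerivAt_det_sub_of_riccati (hU' t) (hS' t) (hURic t) (hSRic t)
  exact is_const_of_deriv_eq_zero (fun t => (hderiv t).differentiableAt)
    (fun t => (hderiv t).deriv) t₁ t₂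

/-- matrix form of Proposition 3.2: if the symmetric matrices
`U(t)`, `S(t)` solve the Riccati equations `U' + U² + R = 0`, `S' + S² + R = 0`
with `tr U(t) = h`, `tr S(t) = −h` and `U(t) − S(t)` positive semidefinite,
then `t ↦ det(U(t) − S(t))` is constant. -/
theorem det_D_constant_along_flow (n : ℕ) (hn : 1 ≤ n) (h : ℝ)
    (R U U' S S' : ℝ → Matrix (Fin n) (Fin n) ℝ)
    -- R is continuous
    (hRcont : ∀ i j, Continuous fun t => R t i j)
    -- U(t) and S(t) are symmetric
    (hUsymm : ∀ t : ℝ, (U t).IsSymm) (hSsymm : ∀ t : ℝ, (S t).IsSymm)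
    -- U and S are continuously differentiable with derivatives U', S'
    (hU' : ∀ (t : ℝ) (i j), HasDerivAt (fun τ => U τ i j) (U' t i j) t)
    (hU'cont : ∀ i j, Continuous fun t => U' t i j)
    (hS' : ∀ (t : ℝ) (i j), HasDerivAt (fun τ => S τ i j) (S' t i j) t)
    (hS'cont : ∀ i j, Continuous fun t => S' t i j)
    -- the Riccati equations
    (hURic : ∀ t : ℝ, U' t + U t * U t + R t = 0)
    (hSRic : ∀ t : ℝ, S' t + S t * S t + R t = 0)
    -- the trace conditions
    (htrU : ∀ t : ℝ, (U t).trace = h) (htrS : ∀ t : ℝ, (S t).trace = -h)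
    -- U(t) − S(t) is positive semidefinite
    (hpos : ∀ t : ℝ, (U t - S t).PosSemidef) :
    ∀ t₁ t₂ : ℝ, (U t₁ - S t₁).det = (U t₂ - S t₂).det :=
  det_D_constant_along_flow_general hU' hS' hURic hSRic fun t => by
    rw [htrU, htrS, add_neg_cancel]
end
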